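/- Let q_max(m) denote the maximum, over all solvable networks with at most m nodes, at most m edges and at most m source messages, of the minimum alphabet size for which the network is solvable. Then there does not exist any computable function f : ℤ≥1 → ℤ≥2 satisfying q_max(m) = O(f(m)) as m → ∞. -/

import Mathlib

open scoped Classical

noncomputable section

/-- The probability of the event `S` under the probability mass function `p`. -/
def Pr {Ω : Type} (p : Ω → ℝ) (S : Set Ω) : ℝ := ∑' ω : S, p ω

/-- `p` is a probability mass function on the sample space `Ω`. -/
def IsProb {Ω : Type} (p : Ω → ℝ) : Prop := (∀ ω, 0 ≤ p ω) ∧ Pr p Set.univ = 1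

/-- The support of a random variable `X`: the set of values attained with positive
probability. -/
def supp {Ω α : Type} (p : Ω → ℝ) (X : Ω → α) : Set α := {a | 0 < Pr p {ω | X ω = a}}

/-- `X` is almost surely a function of `Y` (written `X ≤ι Y` in the paper). -/
def FuncOf {Ω α β : Type} (p : Ω → ℝ) (X : Ω → α) (Y : Ω → β) : Prop :=
  ∃ f : β → α, Pr p {ω | X ω = f (Y ω)} = 1

/-- The random variables `X` and `Y` are independent. -/
def IndepRV {Ω α β : Type} (p : Ω → ℝ) (X : Ω → α) (Y : Ω → β) : Prop :=
  ∀ (a : α) (b : β), Pr p {ω | X ω = a ∧ Y ω = b} = Pr p {ω | X ω = a} * Pr p {ω | Y ω = b}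

/-- The random variables `X`, `Y`, `Z` are mutually independent:
`X ⟂ Y` and `(X, Y) ⟂ Z`. -/
def Indep3 {Ω α β γ : Type} (p : Ω → ℝ) (X : Ω → α) (Y : Ω → β) (Z : Ω → γ) : Prop :=
  IndepRV p X Y ∧ IndepRV p (fun ω => (X ω, Y ω)) Z

/-- The predicate `tri(X, Y, Z)`: each variable is a.s. a function of the other two, and the
three variables are pairwise independent. -/
def tri {Ω α β γ : Type} (p : Ω → ℝ) (X : Ω → α) (Y : Ω → β) (Z : Ω → γ) : Prop :=
  FuncOf p X (fun ω => (Y ω, Z ω)) ∧ FuncOf p Y (fun ω => (X ω, Z ω)) ∧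
    FuncOf p Z (fun ω => (X ω, Y ω)) ∧
    IndepRV p X Y ∧ IndepRV p X Z ∧ IndepRV p Y Z


/-- A network coding instance: `(n, s, edges, acc, dem)` where `n` is the number of nodes
(nodes are `0, …, n−1`), `s` is the number of source messages (messages are `0, …, s−1`),
`edges` is the list of directed edges of the multigraph (edges are indexed by their
position in the list), `acc` lists, for each node `v`, the set `C_v` of message indices
the node has access to, and `dem` lists, for each node `v`, the set `D_v` of message
indices the node demands. -/
abbrev Network : Type := ℕ × ℕ × List (ℕ × ℕ) × List (List ℕ) × List (List ℕ)

/-- The indices of the edges coming into node `v`. -/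
def inEdges (edges : List (ℕ × ℕ)) (v : ℕ) : List ℕ :=
  (List.range edges.length).filter fun e => (edges.getD e (0, 0)).2 = v

/-- The indices of the edges going out of node `v`. -/
def outEdges (edges : List (ℕ × ℕ)) (v : ℕ) : List ℕ :=
  (List.range edges.length).filter fun e => (edges.getD e (0, 0)).1 = v

/-- The network is valid: the edges join existing nodes, the directed multigraph is
acyclic (it admits a topological ranking), and the access/demand lists assign a set of
existing message indices to each node. -/
def NetworkValid : Network → Prop := fun net =>
  match net with
  | (n, s, edges, acc, dem) =>
    (∀ e ∈ edges, e.1 < n ∧ e.2 < n) ∧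
    (∃ rank : ℕ → ℕ, ∀ e ∈ edges, rank e.1 < rank e.2) ∧
    acc.length = n ∧ dem.length = n ∧
    (∀ l ∈ acc, ∀ i ∈ l, i < s) ∧ (∀ l ∈ dem, ∀ i ∈ l, i < s)

/-- The network is solvable with alphabet size `q`: there are a probability space, source
messages `M_0, …, M_{s−1}` that are i.i.d. uniform with cardinality `q`, and signals
`X_e` of cardinality at most `q` along the edges, such that at every node `v` the pair
`(M_{D_v}, X_{out(v)})` is almost surely a function of `(M_{C_v}, X_{in(v)})`. -/
def SolvableWith : Network → ℕ → Prop := fun net q =>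
  match net with
  | (n, s, edges, acc, dem) =>
    ∃ (Ω : Type) (p : Ω → ℝ), IsProb p ∧
      ∃ (M : ℕ → Ω → Fin q) (X : ℕ → Ω → Fin q),
        (∀ m : ℕ → Fin q,
          Pr p {ω | ∀ i < s, M i ω = m i} = ((q : ℝ))⁻¹ ^ s) ∧
        ∀ v < n, FuncOf p
          (fun ω => (((dem.getD v []).map fun i => M i ω),
                     (outEdges edges v).map fun e => X e ω))
          (fun ω => (((acc.getD v []).map fun i => M i ω),
                     (inEdges edges v).map fun e => X e ω))

/-- The network is solvable: it is solvable with some alphabet size `q ≥ 2`. -/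
def Solvable (net : Network) : Prop := ∃ q, 2 ≤ q ∧ SolvableWith net q

/-- The minimum alphabet size of a (solvable) network: the least `q ≥ 2` for which the
network is solvable with alphabet size `q`. -/
def minAlphabet (net : Network) : ℕ := sInf {q | 2 ≤ q ∧ SolvableWith net q}

/-- The network has at most `m` nodes, at most `m` edges, and at most `m` source
messages. -/
def NetworkSizeLE : Network → ℕ → Prop := fun net m =>
  match net with
  | (n, s, edges, _, _) => n ≤ m ∧ edges.length ≤ m ∧ s ≤ m

/-- `qMax m`: the maximum, over all solvable (valid) networks with at most `m` nodes,
`m` edges and `m` source messages, of the minimum alphabet size for which the network is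
solvable. -/
def qMax (m : ℕ) : ℕ :=
  sSup {q | ∃ net : Network, NetworkValid net ∧ NetworkSizeLE net m ∧ Solvable net ∧
    q = minAlphabet net}

/-!
Let a program computing `F` run on the input `m` and halt after `T` steps. We construct a solvable
network, of size polynomial in `m`, every alphabet of which satisfies `T < q ^ q`. Since the output
of the program has at most `m + T` letters, choosing for `F` a function that grows much faster than
a given computable bound gives the theorem.

The demands of a network can express functional dependencies between variables. Such dependencies
can turn the alphabet into an elementary abelian 2-group `V` and further variables into the graphs
of endomorphisms of `V` that satisfy prescribed equations `x * y + y * x = z`. The equations for a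
stack machine assign an operator to each configuration, in such a way that the adjoint action of the
operator `time` maps the operator of a configuration to that of the preceding one and kills that of
the initial one. Another equation prevents the operator of the initial configuration from vanishing,
so the adjoint action of `time` has a nilpotent chain of length `T + 1` in `End V`, which therefore
has more than `T` elements.

Conversely the equations hold on a finite Fock space in characteristic two: letters and `time` act
by transporting the creation operators of a basis, which consists of the remaining times up to `T`
and the stacks truncated to the depth visible in `T` steps. Hence the network is solvable.
-/

section Probability

variable {Ω α β : Type} {p : Ω → ℝ}

lemma IsProb.summable (hp : IsProb p) : Summable p := by
  by_contra hns
  have htsum : ∑' ω, p ω = 1 := by simpa only [Pr, tsum_univ] using hp.2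
  rw [tsum_eq_zero_of_not_summable hns] at htsum
  exact zero_ne_one htsum

lemma IsProb.pr_eq_zero_iff (hp : IsProb p) {S : Set Ω} : Pr p S = 0 ↔ ∀ ω ∈ S, p ω = 0 := by
  have hnonneg : 0 ≤ fun ω : S => p ω := fun ω => hp.1 ω
  have hsum : Summable fun ω : S => p ω := hp.summable.subtype S
  rw [Pr, ← hsum.hasSum_iff, hasSum_zero_iff_of_nonneg hnonneg, funext_iff, Subtype.forall]
  rfl

lemma IsProb.pr_eq_one_iff (hp : IsProb p) {S : Set Ω} :
    Pr p S = 1 ↔ ∀ ω, 0 < p ω → ω ∈ S := by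
  have hcompl : Pr p S + Pr p Sᶜ = 1 := by
    rw [← hp.2]
    simpa only [Pr, tsum_univ] using
      (hp.summable.subtype S).tsum_add_tsum_compl (hp.summable.subtype Sᶜ)
  rw [← hcompl, left_eq_add, hp.pr_eq_zero_iff]
  refine forall_congr' fun ω => ?_
  rw [(hp.1 ω).lt_iff_ne, ← not_imp_not, Set.mem_compl_iff, not_not, ne_comm]

lemma IsProb.exists_mem_pos (hp : IsProb p) {S : Set Ω} (hS : 0 < Pr p S) :
    ∃ ω ∈ S, 0 < p ω := by
  by_contra! hneg
  exact hS.ne' (hp.pr_eq_zero_iff.2 fun ω hω => (hneg ω hω).antisymm (hp.1 ω))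

lemma IsProb.funcOf_iff [Nonempty α] (hp : IsProb p) {X : Ω → α} {Y : Ω → β} :
    FuncOf p X Y ↔ ∀ ω ω', 0 < p ω → 0 < p ω' → Y ω = Y ω' → X ω = X ω' := by
  constructor
  · rintro ⟨f, hf⟩ ω ω' hω hω' hY
    have hX : ∀ ω, 0 < p ω → X ω = f (Y ω) := hp.pr_eq_one_iff.1 hf
    rw [hX ω hω, hX ω' hω', hY]
  · intro h
    let support := {ω // 0 < p ω}
    have hfactors : Function.FactorsThrough (fun ω : support => X ω) (fun ω : support => Y ω) :=
      fun ω ω' => h ω ω' ω.2 ω'.2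
    refine ⟨Function.extend (fun ω : support => Y ω) (fun ω : support => X ω)
      fun _ => Classical.arbitrary α, hp.pr_eq_one_iff.2 fun ω hω => ?_⟩
    exact (hfactors.extend_apply _ ⟨ω, hω⟩).symm

lemma isProb_uniform [Fintype Ω] [Nonempty Ω] : IsProb fun _ : Ω => (Fintype.card Ω : ℝ)⁻¹ :=
  ⟨fun _ => by positivity, by simp [Pr, tsum_fintype]⟩

lemma pr_singleton (ω : Ω) : Pr p {ω} = p ω := by
  rw [Pr, tsum_singleton]

end Probability

section Boundedness

lemma solvableWith_mono {n s : ℕ} {edges : List (ℕ × ℕ)} {acc acc' dem dem' : List (List ℕ)}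
    (hacc : ∀ v < n, acc.getD v [] ⊆ acc'.getD v [])
    (hdem : ∀ v < n, dem'.getD v [] ⊆ dem.getD v []) {q : ℕ}
    (h : SolvableWith (n, s, edges, acc, dem) q) : SolvableWith (n, s, edges, acc', dem') q := by
  obtain ⟨Ω, p, hp, M, X, hM, hnode⟩ := h
  refine ⟨Ω, p, hp, M, X, hM, fun v hv => hp.funcOf_iff.2 fun ω ω' hω hω' hin => ?_⟩
  obtain ⟨hinM, hinX⟩ := Prod.mk.inj hin
  have hinM' := List.map_congr_left fun i hi => List.map_inj_left.1 hinM i (hacc v hv hi)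
  obtain ⟨houtM, houtX⟩ := Prod.mk.inj
    (hp.funcOf_iff.1 (hnode v hv) ω ω' hω hω' (Prod.ext hinM' hinX))
  have houtM' := List.map_congr_left fun i hi => List.map_inj_left.1 houtM i (hdem v hv hi)
  exact Prod.ext houtM' houtX

/-- The increasing duplicate-free lists of the message indices below `s` in each of the first
`n` entries of `lists`. -/
def normalizeLists (n s : ℕ) (lists : List (List ℕ)) : List (List ℕ) :=
  (List.range n).map fun v => (List.range s).filter (· ∈ lists.getD v [])

lemma mem_getD_normalizeLists {n s v i : ℕ} {lists : List (List ℕ)} (hv : v < n)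
    (hlists : ∀ l ∈ lists, ∀ i ∈ l, i < s) :
    i ∈ (normalizeLists n s lists).getD v [] ↔ i ∈ lists.getD v [] := by
  have hlt : i ∈ lists.getD v [] → i < s := fun hi => by
    rcases lt_or_ge v lists.length with hlen | hlen
    · rw [List.getD_eq_getElem _ _ hlen] at hi
      exact hlists _ (List.getElem_mem hlen) i hi
    · rw [List.getD_eq_default _ _ hlen] at hi
      exact absurd hi List.not_mem_nil
  rw [normalizeLists, List.getD_eq_getElem _ _ (by simpa using hv)]
  simpa using hlt

/-- The network with the same nodes, edges, messages, access sets and demand sets, in which the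
lists representing these sets are increasing and duplicate-free. -/
def normalizeNetwork : Network → Network := fun net =>
  match net with
  | (n, s, edges, acc, dem) => (n, s, edges, normalizeLists n s acc, normalizeLists n s dem)

lemma solvableWith_normalizeNetwork_iff {net : Network} (hnet : NetworkValid net) (q : ℕ) :
    SolvableWith (normalizeNetwork net) q ↔ SolvableWith net q := by
  obtain ⟨n, s, edges, acc, dem⟩ := net
  obtain ⟨-, -, -, -, hacc, hdem⟩ := hnet
  exact ⟨solvableWith_mono (fun _ hv _ => (mem_getD_normalizeLists hv hacc).1)
      fun _ hv _ => (mem_getD_normalizeLists hv hdem).2,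
    solvableWith_mono (fun _ hv _ => (mem_getD_normalizeLists hv hacc).2)
      fun _ hv _ => (mem_getD_normalizeLists hv hdem).1⟩

lemma minAlphabet_normalizeNetwork {net : Network} (hnet : NetworkValid net) :
    minAlphabet (normalizeNetwork net) = minAlphabet net := by
  simp only [minAlphabet, solvableWith_normalizeNetwork_iff hnet]

lemma finite_lists_of_finite {α : Type*} {s : Set α} (hs : s.Finite) (n : ℕ) :
    {l : List α | l.length ≤ n ∧ ∀ x ∈ l, x ∈ s}.Finite := by
  have := hs.to_subtype
  refine ((List.finite_length_le s n).image (List.map Subtype.val)).subset ?_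
  rintro l ⟨hlen, hmem⟩
  exact ⟨l.attachWith (· ∈ s) hmem, by simpa using hlen, by simp⟩

lemma finite_image_normalizeNetwork (m : ℕ) :
    (normalizeNetwork '' {net | NetworkValid net ∧ NetworkSizeLE net m}).Finite := by
  have hIio := Set.finite_Iio m
  have hedges := finite_lists_of_finite (hIio.prod hIio) m
  have hlists := finite_lists_of_finite (finite_lists_of_finite hIio m) m
  refine ((Set.finite_Iic m).prod ((Set.finite_Iic m).prod
    (hedges.prod (hlists.prod hlists)))).subset ?_
  rintro _ ⟨⟨n, s, edges, acc, dem⟩, ⟨hvalid, hsize⟩, rfl⟩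
  obtain ⟨hn, hlen, hs⟩ := hsize
  have hnormal : ∀ lists, (normalizeLists n s lists).length ≤ m ∧
      ∀ l ∈ normalizeLists n s lists, l.length ≤ m ∧ ∀ i ∈ l, i ∈ Set.Iio m := by
    refine fun lists => ⟨by simpa [normalizeLists] using hn, fun l hl => ?_⟩
    obtain ⟨v, -, rfl⟩ := List.mem_map.1 hl
    refine ⟨(List.length_filter_le _ _).trans (by simpa using hs), fun i hi => ?_⟩
    exact (List.mem_range.1 (List.mem_filter.1 hi).1).trans_le hs
  refine ⟨hn, hs, ⟨hlen, fun e he => ?_⟩, hnormal acc, hnormal dem⟩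
  exact ⟨(hvalid.1 e he).1.trans_le hn, (hvalid.1 e he).2.trans_le hn⟩

lemma bddAbove_minAlphabet (m : ℕ) :
    BddAbove {q | ∃ net : Network, NetworkValid net ∧ NetworkSizeLE net m ∧ Solvable net ∧
      q = minAlphabet net} := by
  refine (((finite_image_normalizeNetwork m).image minAlphabet).subset ?_).bddAbove
  rintro _ ⟨net, hvalid, hsize, -, rfl⟩
  exact ⟨_, ⟨net, ⟨hvalid, hsize⟩, rfl⟩, minAlphabet_normalizeNetwork hvalid⟩

lemma minAlphabet_le_qMax {net : Network} {m : ℕ} (hvalid : NetworkValid net)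
    (hsize : NetworkSizeLE net m) (hsolv : Solvable net) : minAlphabet net ≤ qMax m :=
  le_csSup (bddAbove_minAlphabet m) ⟨net, hvalid, hsize, hsolv, rfl⟩

lemma Solvable.solvableWith_minAlphabet {net : Network} (h : Solvable net) :
    2 ≤ minAlphabet net ∧ SolvableWith net (minAlphabet net) :=
  Nat.sInf_mem h

lemma networkSizeLE_mono {net : Network} {m m' : ℕ} (hsize : NetworkSizeLE net m) (hm : m ≤ m') :
    NetworkSizeLE net m' :=
  ⟨hsize.1.trans hm, hsize.2.1.trans hm, hsize.2.2.trans hm⟩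

end Boundedness

/-- A network on finite types of nodes and messages without parallel edges. -/
structure FiniteNetwork where
  Node : Type
  Message : Type
  [fintypeNode : Fintype Node]
  [fintypeMessage : Fintype Message]
  Adj : Node → Node → Prop
  access : Node → Set Message
  demand : Node → Set Message
  rank : Node → ℕ
  rank_lt : ∀ u v, Adj u v → rank u < rank v

attribute [instance] FiniteNetwork.fintypeNode FiniteNetwork.fintypeMessage

lemma mem_inEdges_map_iff {α : Type*} {f : α → ℕ} (hf : f.Injective) (L : List (α × α)) (v : α)
    (i : ℕ) : i ∈ inEdges (L.map (Prod.map f f)) (f v) ↔ ∃ h : i < L.length, L[i].2 = v := by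
  simp only [inEdges, List.mem_filter, List.mem_range, List.length_map, decide_eq_true_eq,
    ← exists_prop]
  refine exists_congr fun h => ?_
  rw [List.getD_eq_getElem _ _ (by simpa using h), List.getElem_map, Prod.map_snd, hf.eq_iff]

lemma mem_outEdges_map_iff {α : Type*} {f : α → ℕ} (hf : f.Injective) (L : List (α × α)) (v : α)
    (i : ℕ) : i ∈ outEdges (L.map (Prod.map f f)) (f v) ↔ ∃ h : i < L.length, L[i].1 = v := by
  simp only [outEdges, List.mem_filter, List.mem_range, List.length_map, decide_eq_true_eq,
    ← exists_prop]
  refine exists_congr fun h => ?_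
  rw [List.getD_eq_getElem _ _ (by simpa using h), List.getElem_map, Prod.map_fst, hf.eq_iff]

namespace FiniteNetwork

variable (A : FiniteNetwork)

/-- Deterministic network codes: the signal along each edge is a function of the message vector,
and what leaves a node is determined by what enters it. -/
def IsSolution {Q : Type} (X : A.Node → A.Node → (A.Message → Q) → Q) : Prop :=
  ∀ v m m', (∀ a ∈ A.access v, m a = m' a) → (∀ u, A.Adj u v → X u v m = X u v m') →
    (∀ a ∈ A.demand v, m a = m' a) ∧ ∀ w, A.Adj v w → X v w m = X v w m'

/-- An enumeration of the nodes. -/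
def nodeIndex (v : A.Node) : ℕ := Fintype.equivFin A.Node v

/-- An enumeration of the messages. -/
def messageIndex (a : A.Message) : ℕ := Fintype.equivFin A.Message a

/-- An enumeration of the edges. -/
def edgeList : List (A.Node × A.Node) := {e : A.Node × A.Node | A.Adj e.1 e.2}.toFinset.toList

/-- The lists of message indices representing a family of sets of messages indexed by the nodes. -/
def indexLists (s : A.Node → Set A.Message) : List (List ℕ) :=
  List.ofFn fun i => (s ((Fintype.equivFin A.Node).symm i)).toFinset.toList.map A.messageIndex

/-- The presentation of a finite network by lists of natural numbers. -/
def toNetwork : Network :=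
  (Fintype.card A.Node, Fintype.card A.Message, A.edgeList.map (Prod.map A.nodeIndex A.nodeIndex),
    A.indexLists A.access, A.indexLists A.demand)

lemma nodeIndex_injective : A.nodeIndex.Injective :=
  Fin.val_injective.comp (Fintype.equivFin A.Node).injective

lemma nodeIndex_lt (v : A.Node) : A.nodeIndex v < Fintype.card A.Node :=
  (Fintype.equivFin A.Node v).2

lemma exists_nodeIndex_eq {i : ℕ} (hi : i < Fintype.card A.Node) : ∃ v, A.nodeIndex v = i :=
  ⟨(Fintype.equivFin A.Node).symm ⟨i, hi⟩, by simp [nodeIndex]⟩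

lemma messageIndex_injective : A.messageIndex.Injective :=
  Fin.val_injective.comp (Fintype.equivFin A.Message).injective

lemma messageIndex_lt (a : A.Message) : A.messageIndex a < Fintype.card A.Message :=
  (Fintype.equivFin A.Message a).2

lemma exists_messageIndex_eq {i : ℕ} (hi : i < Fintype.card A.Message) :
    ∃ a, A.messageIndex a = i :=
  ⟨(Fintype.equivFin A.Message).symm ⟨i, hi⟩, by simp [messageIndex]⟩

lemma mem_edgeList {e : A.Node × A.Node} : e ∈ A.edgeList ↔ A.Adj e.1 e.2 := by
  simp [edgeList]

lemma length_edgeList_le : A.edgeList.length ≤ Fintype.card A.Node ^ 2 := by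
  rw [edgeList, Finset.length_toList, sq, ← Fintype.card_prod]
  exact Finset.card_le_univ _

lemma adj_getElem_edgeList {i : ℕ} (hi : i < A.edgeList.length) :
    A.Adj A.edgeList[i].1 A.edgeList[i].2 :=
  A.mem_edgeList.1 (List.getElem_mem hi)

lemma idxOf_getElem_edgeList {i : ℕ} (hi : i < A.edgeList.length) :
    A.edgeList.idxOf A.edgeList[i] = i :=
  (Finset.nodup_toList _).idxOf_getElem i hi

lemma idxOf_edgeList_lt {u v : A.Node} (h : A.Adj u v) :
    A.edgeList.idxOf (u, v) < A.edgeList.length :=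
  List.idxOf_lt_length_of_mem (A.mem_edgeList.2 h)

lemma getElem_idxOf_edgeList {u v : A.Node} (h : A.Adj u v) :
    A.edgeList[A.edgeList.idxOf (u, v)]'(A.idxOf_edgeList_lt h) = (u, v) :=
  List.getElem_idxOf _

lemma indexLists_getD (s : A.Node → Set A.Message) (v : A.Node) :
    (A.indexLists s).getD (A.nodeIndex v) [] = (s v).toFinset.toList.map A.messageIndex := by
  rw [indexLists, List.getD_eq_getElem _ _ (by simpa using A.nodeIndex_lt v)]
  simp [nodeIndex]

lemma lt_of_mem_indexLists {s : A.Node → Set A.Message} {l : List ℕ} (hl : l ∈ A.indexLists s)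
    {i : ℕ} (hi : i ∈ l) : i < Fintype.card A.Message := by
  obtain ⟨j, rfl⟩ := List.mem_ofFn.1 hl
  obtain ⟨a, -, rfl⟩ := List.mem_map.1 hi
  exact A.messageIndex_lt a

lemma networkValid_toNetwork : NetworkValid A.toNetwork := by
  refine ⟨fun e he => ?_, ?_, by simp [indexLists], by simp [indexLists],
    fun _ hl _ => A.lt_of_mem_indexLists hl, fun _ hl _ => A.lt_of_mem_indexLists hl⟩
  · obtain ⟨e, -, rfl⟩ := List.mem_map.1 he
    exact ⟨A.nodeIndex_lt e.1, A.nodeIndex_lt e.2⟩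
  · refine ⟨Function.extend A.nodeIndex A.rank 0, fun e he => ?_⟩
    obtain ⟨e, hadj, rfl⟩ := List.mem_map.1 he
    simpa only [Prod.map_fst, Prod.map_snd, A.nodeIndex_injective.extend_apply] using
      A.rank_lt _ _ (A.mem_edgeList.1 hadj)

lemma networkSizeLE_toNetwork {N : ℕ} (hnode : Fintype.card A.Node ^ 2 ≤ N)
    (hmessage : Fintype.card A.Message ≤ N) : NetworkSizeLE A.toNetwork N := by
  refine ⟨(Nat.le_self_pow two_ne_zero _).trans hnode, ?_, hmessage⟩
  rw [List.length_map]
  exact A.length_edgeList_le.trans hnode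

lemma map_indexLists_eq_iff {Q : Type} (s : A.Node → Set A.Message) (v : A.Node) (M M' : ℕ → Q) :
    ((A.indexLists s).getD (A.nodeIndex v) []).map M =
        ((A.indexLists s).getD (A.nodeIndex v) []).map M' ↔
      ∀ a ∈ s v, M (A.messageIndex a) = M' (A.messageIndex a) := by
  rw [indexLists_getD]
  simp

lemma map_inEdges_eq_iff {Q : Type} (v : A.Node) (X X' : ℕ → Q) :
    (inEdges (A.edgeList.map (Prod.map A.nodeIndex A.nodeIndex)) (A.nodeIndex v)).map X =
        (inEdges (A.edgeList.map (Prod.map A.nodeIndex A.nodeIndex)) (A.nodeIndex v)).map X' ↔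
      ∀ u, A.Adj u v → X (A.edgeList.idxOf (u, v)) = X' (A.edgeList.idxOf (u, v)) := by
  simp only [List.map_inj_left, mem_inEdges_map_iff A.nodeIndex_injective]
  constructor
  · exact fun h u huv =>
      h _ ⟨A.idxOf_edgeList_lt huv, by rw [A.getElem_idxOf_edgeList huv]⟩
  · rintro h i ⟨hi, rfl⟩
    simpa only [Prod.mk.eta, A.idxOf_getElem_edgeList hi] using h _ (A.adj_getElem_edgeList hi)

lemma map_outEdges_eq_iff {Q : Type} (v : A.Node) (X X' : ℕ → Q) :
    (outEdges (A.edgeList.map (Prod.map A.nodeIndex A.nodeIndex)) (A.nodeIndex v)).map X =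
        (outEdges (A.edgeList.map (Prod.map A.nodeIndex A.nodeIndex)) (A.nodeIndex v)).map X' ↔
      ∀ w, A.Adj v w → X (A.edgeList.idxOf (v, w)) = X' (A.edgeList.idxOf (v, w)) := by
  simp only [List.map_inj_left, mem_outEdges_map_iff A.nodeIndex_injective]
  constructor
  · exact fun h w hvw =>
      h _ ⟨A.idxOf_edgeList_lt hvw, by rw [A.getElem_idxOf_edgeList hvw]⟩
  · rintro h i ⟨hi, rfl⟩
    simpa only [Prod.mk.eta, A.idxOf_getElem_edgeList hi] using h _ (A.adj_getElem_edgeList hi)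

lemma exists_isSolution_of_solvableWith {q : ℕ} [NeZero q] (h : SolvableWith A.toNetwork q) :
    ∃ X : A.Node → A.Node → (A.Message → Fin q) → Fin q, A.IsSolution X := by
  obtain ⟨Ω, p, hp, M, X, hM, hnode⟩ := h
  -- Independence and uniformity realize each message vector by an outcome of positive mass.
  have hrealize : ∀ m : A.Message → Fin q, ∃ ω, (∀ a, M (A.messageIndex a) ω = m a) ∧ 0 < p ω := by
    intro m
    have hpos : 0 < Pr p {ω | ∀ i < Fintype.card A.Message,
        M i ω = Function.extend A.messageIndex m 0 i} := by
      rw [hM]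
      have : (0 : ℝ) < q := Nat.cast_pos.2 (NeZero.pos q)
      positivity
    obtain ⟨ω, hω, hpω⟩ := hp.exists_mem_pos hpos
    refine ⟨ω, fun a => ?_, hpω⟩
    rw [hω _ (A.messageIndex_lt a), A.messageIndex_injective.extend_apply]
  choose outcome hout hpos using hrealize
  refine ⟨fun u v m => X (A.edgeList.idxOf (u, v)) (outcome m), fun v m m' hacc hin => ?_⟩
  have hagree := hp.funcOf_iff.1 (hnode _ (A.nodeIndex_lt v)) (outcome m) (outcome m')
    (hpos m) (hpos m')
  simp only [Prod.mk.injEq, map_indexLists_eq_iff, map_inEdges_eq_iff,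
    map_outEdges_eq_iff, hout] at hagree
  exact hagree ⟨hacc, hin⟩

lemma solvableWith_of_isSolution {q : ℕ} [NeZero q]
    {X : A.Node → A.Node → (A.Message → Fin q) → Fin q} (hX : A.IsSolution X) :
    SolvableWith A.toNetwork q := by
  have hp := isProb_uniform (Ω := A.Message → Fin q)
  have hmessage (ω : A.Message → Fin q) (a : A.Message) :
      Function.extend A.messageIndex ω 0 (A.messageIndex a) = ω a :=
    A.messageIndex_injective.extend_apply ω 0 a
  let signal (i : ℕ) (ω : A.Message → Fin q) : Fin q :=
    if h : i < A.edgeList.length then X A.edgeList[i].1 A.edgeList[i].2 ω else 0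
  have hsignal : ∀ u v, A.Adj u v → ∀ ω, signal (A.edgeList.idxOf (u, v)) ω = X u v ω := by
    intro u v huv ω
    simp only [signal, dif_pos (A.idxOf_edgeList_lt huv), A.getElem_idxOf_edgeList huv]
  refine ⟨A.Message → Fin q, _, hp, fun i ω => Function.extend A.messageIndex ω 0 i, signal,
    fun m => ?_, fun i hi => ?_⟩
  · have hsingleton : {ω : A.Message → Fin q | ∀ i < Fintype.card A.Message,
        Function.extend A.messageIndex ω 0 i = m i} = {fun a => m (A.messageIndex a)} := by
      refine Set.eq_singleton_iff_unique_mem.2 ⟨fun i hi => ?_, fun ω hω => funext fun a => ?_⟩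
      · obtain ⟨a, rfl⟩ := A.exists_messageIndex_eq hi
        exact hmessage _ a
      · rw [← hω _ (A.messageIndex_lt a), hmessage]
    rw [hsingleton, pr_singleton]
    simp
  · obtain ⟨v, rfl⟩ := A.exists_nodeIndex_eq hi
    refine hp.funcOf_iff.2 fun ω ω' _ _ hin => ?_
    simp only [Prod.mk.injEq, map_indexLists_eq_iff, map_inEdges_eq_iff,
      map_outEdges_eq_iff, hmessage] at hin ⊢
    obtain ⟨hdem, hout⟩ := hX v ω ω' hin.1 fun u huv => by
      simpa only [hsignal u v huv] using hin.2 u huv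
    exact ⟨hdem, fun w hvw => by simpa only [hsignal v w hvw] using hout w hvw⟩

theorem solvableWith_toNetwork_iff {q : ℕ} [NeZero q] :
    SolvableWith A.toNetwork q ↔
      ∃ X : A.Node → A.Node → (A.Message → Fin q) → Fin q, A.IsSolution X :=
  ⟨A.exists_isSolution_of_solvableWith, fun ⟨_, hX⟩ => A.solvableWith_of_isSolution hX⟩

end FiniteNetwork

section Determines

variable {μ δ Q : Type}

/-- The value at a message vector of a variable, which is either a message or a signal. -/
def valueOf (Y : δ → (μ → Q) → Q) : μ ⊕ δ → (μ → Q) → Q :=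
  Sum.elim (fun a m => m a) Y

/-- The variable `t` is a function of the variables in `S`. -/
def Determines (Y : δ → (μ → Q) → Q) (S : Set (μ ⊕ δ)) (t : μ ⊕ δ) : Prop :=
  ∀ m m', (∀ s ∈ S, valueOf Y s m = valueOf Y s m') → valueOf Y t m = valueOf Y t m'

lemma Determines.conj {Q' : Type} (e : Q ≃ Q') {Y : δ → (μ → Q) → Q} {S : Set (μ ⊕ δ)}
    {t : μ ⊕ δ} (h : Determines Y S t) :
    Determines (fun j m => e (Y j (e.symm ∘ m))) S t := by
  have hvalue (s : μ ⊕ δ) (m : μ → Q') :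
      valueOf (fun j m => e (Y j (e.symm ∘ m))) s m = e (valueOf Y s (e.symm ∘ m)) := by
    cases s <;> simp [valueOf]
  intro m m' hS
  simp only [hvalue, e.apply_eq_iff_eq] at hS ⊢
  exact h _ _ hS

end Determines

/-- A network-like system in which each signal is broadcast: every signal is a function of its
`source`, and every check recovers the message `target` from the variables in `given`. -/
structure DemandSystem where
  Message : Type
  Signal : Type
  Check : Type
  [fintypeMessage : Fintype Message]
  [fintypeSignal : Fintype Signal]
  [fintypeCheck : Fintype Check]
  source : Signal → Set (Message ⊕ Signal)
  rank : Signal → ℕ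
  rank_lt : ∀ j i, .inr i ∈ source j → rank i < rank j
  given : Check → Set (Message ⊕ Signal)
  target : Check → Message

attribute [instance] DemandSystem.fintypeMessage DemandSystem.fintypeSignal
  DemandSystem.fintypeCheck

namespace DemandSystem

variable (S : DemandSystem)

/-- The signals `Y` satisfy all the requirements of the demand system. -/
structure IsSolution {Q : Type} (Y : S.Signal → (S.Message → Q) → Q) : Prop where
  produces : ∀ j, Determines Y (S.source j) (.inr j)
  decodes : ∀ k, Determines Y (S.given k) (.inl (S.target k))

lemma IsSolution.conj {S : DemandSystem} {Q Q' : Type} (e : Q ≃ Q')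
    {Y : S.Signal → (S.Message → Q) → Q} (hY : S.IsSolution Y) :
    S.IsSolution fun j m => e (Y j (e.symm ∘ m)) :=
  ⟨fun j => (hY.produces j).conj e, fun k => (hY.decodes k).conj e⟩

/-- The nodes of the network of a demand system: a producer and a relay for each signal, and the
checks. The relay receives a single edge, so that all its outgoing edges carry the same
information. -/
abbrev Node : Type := S.Signal ⊕ S.Signal ⊕ S.Check

variable {S} in
/-- The node computing the signal `j`. -/
@[match_pattern] abbrev producer (j : S.Signal) : S.Node := .inl j

variable {S} in
/-- The node broadcasting the signal `j`. -/
@[match_pattern] abbrev relay (j : S.Signal) : S.Node := .inr (.inl j)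

variable {S} in
/-- The node performing the check `k`. -/
@[match_pattern] abbrev check (k : S.Check) : S.Node := .inr (.inr k)

/-- The edges of the network of a demand system. -/
def Adj : S.Node → S.Node → Prop
  | producer j, relay i => i = j
  | relay i, producer j => .inr i ∈ S.source j
  | relay i, check k => .inr i ∈ S.given k
  | _, _ => False

/-- The access sets of the network of a demand system. -/
def access : S.Node → Set S.Message
  | producer j => {a | .inl a ∈ S.source j}
  | relay _ => ∅
  | check k => {a | .inl a ∈ S.given k}

/-- The demand sets of the network of a demand system. -/
def demand : S.Node → Set S.Message
  | check k => {S.target k}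
  | _ => ∅

/-- A topological ranking of the network of a demand system. -/
def nodeRank : S.Node → ℕ
  | producer j => 2 * S.rank j
  | relay j => 2 * S.rank j + 1
  | check _ => 2 * ∑ j, S.rank j + 2

lemma nodeRank_lt_of_adj : ∀ u v, S.Adj u v → S.nodeRank u < S.nodeRank v
  | producer j, relay i, h => by
    obtain rfl : i = j := h
    exact Nat.lt_succ_self _
  | relay i, producer j, h => by
    have := S.rank_lt j i h
    simp only [nodeRank]
    omega
  | relay i, check _, _ => by
    have : S.rank i ≤ ∑ j, S.rank j := Finset.single_le_sum (by simp) (Finset.mem_univ i)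
    simp only [nodeRank]
    omega

/-- The network of a demand system. -/
def toFiniteNetwork : FiniteNetwork where
  Node := S.Node
  Message := S.Message
  Adj := S.Adj
  access := S.access
  demand := S.demand
  rank := S.nodeRank
  rank_lt := S.nodeRank_lt_of_adj

lemma isSolution_of_toFiniteNetwork {Q : Type} {X : S.Node → S.Node → (S.Message → Q) → Q}
    (hX : S.toFiniteNetwork.IsSolution X) : S.IsSolution fun j => X (producer j) (relay j) := by
  have hrelay : ∀ i w m m', S.Adj (relay i) w →
      X (producer i) (relay i) m = X (producer i) (relay i) m' →
      X (relay i) w m = X (relay i) w m' := by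
    intro i w m m' hw hsignal
    refine (hX (relay i) m m' (fun _ ha => ha.elim) ?_).2 w hw
    rintro (j | j | k) hadj
    · obtain rfl : i = j := hadj
      exact hsignal
    · exact hadj.elim
    · exact hadj.elim
  constructor
  · intro j m m' hagree
    refine (hX (producer j) m m' (fun a ha => hagree _ ha) ?_).2 (relay j) rfl
    rintro (i | i | k) hadj
    · exact hadj.elim
    · exact hrelay i _ m m' hadj (hagree _ hadj)
    · exact hadj.elim
  · intro k m m' hagree
    refine (hX (check k) m m' (fun a ha => hagree _ ha) ?_).1 (S.target k) rfl
    rintro (i | i | k) hadj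
    · exact hadj.elim
    · exact hrelay i _ m m' hadj (hagree _ hadj)
    · exact hadj.elim

lemma toFiniteNetwork_isSolution {Q : Type} {Y : S.Signal → (S.Message → Q) → Q}
    (hY : S.IsSolution Y) :
    S.toFiniteNetwork.IsSolution fun u _ => match u with
      | producer j => Y j
      | relay j => Y j
      | check k => fun m => m (S.target k) := by
  rintro (j | j | k) m m' hacc hin
  · refine ⟨fun _ ha => ha.elim, fun _ _ => hY.produces j m m' ?_⟩
    rintro (a | i) hs
    · exact hacc a hs
    · exact hin (relay i) hs
  · exact ⟨fun _ ha => ha.elim, fun _ _ => hin (producer j) rfl⟩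
  · refine ⟨?_, fun w hw => hw.elim⟩
    rintro _ rfl
    refine hY.decodes k m m' ?_
    rintro (a | i) hs
    · exact hacc a hs
    · exact hin (relay i) hs

/-- The number of nodes and messages of the network of a demand system. -/
def size : ℕ := 2 * Fintype.card S.Signal + Fintype.card S.Check + Fintype.card S.Message

theorem exists_network : ∃ net : Network, NetworkValid net ∧ NetworkSizeLE net (S.size ^ 2) ∧
    ∀ q : ℕ, q ≠ 0 →
      (SolvableWith net q ↔ ∃ Y : S.Signal → (S.Message → Fin q) → Fin q, S.IsSolution Y) := by
  refine ⟨S.toFiniteNetwork.toNetwork, S.toFiniteNetwork.networkValid_toNetwork,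
    S.toFiniteNetwork.networkSizeLE_toNetwork (Nat.pow_le_pow_left ?_ 2) ?_, fun q hq => ?_⟩
  · change Fintype.card S.Node ≤ S.size
    simp only [Fintype.card_sum, size]
    omega
  · exact (Nat.le_add_left _ _).trans (Nat.le_self_pow two_ne_zero _)
  · have : NeZero q := ⟨hq⟩
    rw [FiniteNetwork.solvableWith_toNetwork_iff]
    exact ⟨fun ⟨_, hX⟩ => ⟨_, S.isSolution_of_toFiniteNetwork hX⟩,
      fun ⟨_, hY⟩ => ⟨_, S.toFiniteNetwork_isSolution hY⟩⟩

end DemandSystem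

/-- Derived variables over finitely many base messages, subject to functional dependencies. If
`pivot j i` then the derived variable `j`, as a function of the base message `i` alone, is required
to be injective. -/
structure DependencySystem where
  Base : Type
  Derived : Type
  Rule : Type
  [fintypeBase : Fintype Base]
  [fintypeDerived : Fintype Derived]
  [fintypeRule : Fintype Rule]
  pivot : Derived → Base → Prop
  exists_pivot : ∀ j, ∃ i, pivot j i
  source : Rule → Set (Base ⊕ Derived)
  target : Rule → Derived

attribute [instance] DependencySystem.fintypeBase DependencySystem.fintypeDerived
  DependencySystem.fintypeRule

namespace DependencySystem

variable (F : DependencySystem)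

/-- The derived variables `Y` satisfy the pivot conditions and the functional dependencies. -/
structure IsModel {Q : Type} (Y : F.Derived → (F.Base → Q) → Q) : Prop where
  eq_of_agree_off : ∀ {j i}, F.pivot j i → ∀ {m m'}, (∀ b ≠ i, m b = m' b) → Y j m = Y j m' →
    m i = m' i
  determines : ∀ k, Determines Y (F.source k) (.inr (F.target k))

/-- The pairs of a derived variable and a pivot of it. -/
abbrev Pivot : Type := {p : F.Derived × F.Base // F.pivot p.1 p.2}

/-- The variables of the demand system of a dependency system: base messages and pads on the left,
plain and padded derived signals on the right. -/
abbrev PaddedVar : Type := (F.Base ⊕ F.Derived) ⊕ (F.Derived ⊕ F.Derived)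

variable {F} in
/-- The base message `b`. -/
abbrev base (b : F.Base) : F.PaddedVar := .inl (.inl b)

variable {F} in
/-- A fresh message masking the derived variable `j`. -/
abbrev pad (j : F.Derived) : F.PaddedVar := .inl (.inr j)

variable {F} in
/-- The derived variable `j`. -/
abbrev plain (j : F.Derived) : F.PaddedVar := .inr (.inl j)

variable {F} in
/-- The derived variable `j` masked by its pad. -/
abbrev padded (j : F.Derived) : F.PaddedVar := .inr (.inr j)

/-- A demand system can only recover messages, so the dependency of a derived variable on its
source is expressed by recovering its pad from its padded version and the source. The other checks
force padding to be a Latin square. -/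
def toDemandSystem : DemandSystem where
  Message := F.Base ⊕ F.Derived
  Signal := F.Derived ⊕ F.Derived
  Check := F.Pivot ⊕ F.Derived ⊕ F.Pivot ⊕ F.Rule
  source
    | .inl _ => Set.range base
    | .inr j => {pad j, plain j}
  rank := Sum.elim 0 1
  rank_lt := by
    rintro (j | j) (i | i) <;> simp
  given
    | .inl p => insert (plain p.1.1) (base '' {p.1.2}ᶜ)
    | .inr (.inl j) => {plain j, padded j}
    | .inr (.inr (.inl p)) => insert (pad p.1.1) (insert (padded p.1.1) (base '' {p.1.2}ᶜ))
    | .inr (.inr (.inr k)) => insert (padded (F.target k)) (Sum.map .inl .inl '' F.source k)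
  target
    | .inl p => .inl p.1.2
    | .inr (.inl j) => .inr j
    | .inr (.inr (.inl p)) => .inl p.1.2
    | .inr (.inr (.inr k)) => .inr (F.target k)

lemma size_toDemandSystem_le : F.toDemandSystem.size ≤
    10 * (Fintype.card F.Base + 1) * (Fintype.card F.Derived + 1) + Fintype.card F.Rule := by
  have hpivot : Fintype.card F.Pivot ≤ Fintype.card F.Derived * Fintype.card F.Base :=
    (Fintype.card_subtype_le _).trans (Fintype.card_prod _ _).le
  change 2 * Fintype.card (F.Derived ⊕ F.Derived) +
    Fintype.card (F.Pivot ⊕ F.Derived ⊕ F.Pivot ⊕ F.Rule) + Fintype.card (F.Base ⊕ F.Derived) ≤ _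
  simp only [Fintype.card_sum]
  nlinarith

section Padding

variable {F} {Q : Type} {Y : F.Derived → (F.Base → Q) → Q}

/-- The plain and padded signals of a model over an additive alphabet. -/
def padWithSum [Add Q] (Y : F.Derived → (F.Base → Q) → Q) :
    F.Derived ⊕ F.Derived → (F.Base ⊕ F.Derived → Q) → Q
  | .inl j, m => Y j (m ∘ .inl)
  | .inr j, m => m (.inr j) + Y j (m ∘ .inl)

lemma IsModel.isSolution_padWithSum [Add Q] [IsCancelAdd Q] (hY : F.IsModel Y) :
    F.toDemandSystem.IsSolution (padWithSum Y) := by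
  constructor
  · rintro (j | j) m m' h
    · exact congrArg (Y j) (funext fun b => h (base b) ⟨b, rfl⟩)
    · exact congrArg₂ (· + ·) (h (pad j) (.inl rfl)) (h (plain j) (.inr rfl))
  · rintro (⟨⟨j, i⟩, hp⟩ | j | ⟨⟨j, i⟩, hp⟩ | k) m m' h
    · exact hY.eq_of_agree_off hp (m := m ∘ .inl) (m' := m' ∘ .inl)
        (fun b hb => h (base b) (.inr ⟨b, hb, rfl⟩)) (h (plain j) (.inl rfl))
    · have hplain : Y j (m ∘ .inl) = Y j (m' ∘ .inl) := h (plain j) (.inl rfl)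
      have hpadded : m (.inr j) + Y j (m ∘ .inl) = m' (.inr j) + Y j (m' ∘ .inl) :=
        h (padded j) (.inr rfl)
      rw [hplain] at hpadded
      exact add_right_cancel hpadded
    · have hpad : m (.inr j) = m' (.inr j) := h (pad j) (.inl rfl)
      have hpadded : m (.inr j) + Y j (m ∘ .inl) = m' (.inr j) + Y j (m' ∘ .inl) :=
        h (padded j) (.inr (.inl rfl))
      rw [hpad] at hpadded
      exact hY.eq_of_agree_off hp (m := m ∘ .inl) (m' := m' ∘ .inl)
        (fun b hb => h (base b) (.inr (.inr ⟨b, hb, rfl⟩))) (add_left_cancel hpadded)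
    · have htarget : Y (F.target k) (m ∘ .inl) = Y (F.target k) (m' ∘ .inl) := by
        refine hY.determines k _ _ ?_
        rintro (b | j) hs
        · exact h (base b) (.inr ⟨.inl b, hs, rfl⟩)
        · exact h (plain j) (.inr ⟨.inr j, hs, rfl⟩)
      have hpadded : m (.inr (F.target k)) + Y (F.target k) (m ∘ .inl) =
          m' (.inr (F.target k)) + Y (F.target k) (m' ∘ .inl) := h (padded _) (.inl rfl)
      rw [htarget] at hpadded
      exact add_right_cancel hpadded

end Padding

end DependencySystem

namespace DemandSystem.IsSolution

open DependencySystem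

variable {F : DependencySystem} {Q : Type}
  {Z : F.Derived ⊕ F.Derived → (F.Base ⊕ F.Derived → Q) → Q}

lemma plain_congr (hZ : F.toDemandSystem.IsSolution Z) (j : F.Derived) (m : F.Base → Q)
    (d d' : F.Derived → Q) : Z (.inl j) (Sum.elim m d) = Z (.inl j) (Sum.elim m d') := by
  refine hZ.produces (.inl j) _ _ ?_
  rintro _ ⟨b, rfl⟩
  rfl

lemma padded_congr (hZ : F.toDemandSystem.IsSolution Z) {j : F.Derived} {m m' : F.Base → Q}
    {d : F.Derived → Q} (h : Z (.inl j) (Sum.elim m d) = Z (.inl j) (Sum.elim m' d)) :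
    Z (.inr j) (Sum.elim m d) = Z (.inr j) (Sum.elim m' d) := by
  refine hZ.produces (.inr j) _ _ ?_
  rintro _ (rfl | rfl)
  · rfl
  · exact h

lemma eq_of_plain_eq (hZ : F.toDemandSystem.IsSolution Z) {j : F.Derived} {i : F.Base}
    (hp : F.pivot j i) {m m' : F.Base → Q} (hm : ∀ b ≠ i, m b = m' b) {d : F.Derived → Q}
    (hval : Z (.inl j) (Sum.elim m d) = Z (.inl j) (Sum.elim m' d)) : m i = m' i := by
  refine hZ.decodes (.inl ⟨(j, i), hp⟩) (Sum.elim m d) (Sum.elim m' d) ?_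
  rintro _ (rfl | ⟨b, hb, rfl⟩)
  · exact hval
  · exact hm b hb

lemma plain_injective (hZ : F.toDemandSystem.IsSolution Z) {j : F.Derived} {i : F.Base}
    (hp : F.pivot j i) (m : F.Base → Q) (d : F.Derived → Q) :
    Function.Injective fun x => Z (.inl j) (Sum.elim (Function.update m i x) d) := by
  intro x y hxy
  have hi := hZ.eq_of_plain_eq hp
    (fun b hb => (Function.update_of_ne hb x m).trans (Function.update_of_ne hb y m).symm) hxy
  simpa only [Function.update_self] using hi

lemma padded_injective_base (hZ : F.toDemandSystem.IsSolution Z) {j : F.Derived} {i : F.Base}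
    (hp : F.pivot j i) (m : F.Base → Q) (d : F.Derived → Q) :
    Function.Injective fun x => Z (.inr j) (Sum.elim (Function.update m i x) d) := by
  intro x y hxy
  have hi : Function.update m i x i = Function.update m i y i := by
    refine hZ.decodes (.inr (.inr (.inl ⟨(j, i), hp⟩)))
      (Sum.elim (Function.update m i x) d) (Sum.elim (Function.update m i y) d) ?_
    rintro _ (rfl | rfl | ⟨b, hb, rfl⟩)
    · rfl
    · exact hxy
    · exact (Function.update_of_ne hb x m).trans (Function.update_of_ne hb y m).symm
  simpa only [Function.update_self] using hi

lemma padded_injective_pad (hZ : F.toDemandSystem.IsSolution Z) (j : F.Derived)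
    (m : F.Base → Q) : Function.Injective fun x => Z (.inr j) (Sum.elim m fun _ => x) := by
  intro x y hxy
  refine hZ.decodes (.inr (.inl j)) (Sum.elim m fun _ => x) (Sum.elim m fun _ => y) ?_
  rintro _ (rfl | rfl)
  · exact hZ.plain_congr j m _ _
  · exact hxy

theorem isModel_plain [Finite Q] (hZ : F.toDemandSystem.IsSolution Z) (c : Q) :
    F.IsModel fun j m => Z (.inl j) (Sum.elim m fun _ => c) := by
  refine ⟨fun hp _ _ hm => hZ.eq_of_plain_eq hp hm, fun k m m' hsource => ?_⟩
  set j := F.target k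
  obtain ⟨x, hx⟩ := Finite.surjective_of_injective (hZ.padded_injective_pad j m')
    (Z (.inr j) (Sum.elim m fun _ => c))
  have hcx : c = x := by
    refine hZ.decodes (.inr (.inr (.inr k))) (Sum.elim m fun _ => c) (Sum.elim m' fun _ => x) ?_
    rintro _ (rfl | ⟨b | i, hs, rfl⟩)
    · exact hx.symm
    · exact hsource (.inl b) hs
    · exact (hsource (.inr i) hs).trans (hZ.plain_congr i m' _ _)
  subst hcx
  -- Replace `m'` by a vector that differs from `m` at a pivot only and has the same plain value.
  obtain ⟨i, hp⟩ := F.exists_pivot j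
  obtain ⟨y, hy⟩ := Finite.surjective_of_injective (hZ.plain_injective hp m fun _ => c)
    (Z (.inl j) (Sum.elim m' fun _ => c))
  have hmy : m i = y := by
    refine hZ.padded_injective_base hp m (fun _ => c) ?_
    beta_reduce at hx ⊢
    rw [Function.update_eq_self, ← hx]
    exact (hZ.padded_congr hy).symm
  subst hmy
  simp only [Function.update_eq_self] at hy
  exact hy

end DemandSystem.IsSolution

/-! ### Groups from abstract sums -/

/-- A function of several variables that behaves like the sum of its arguments in a group with
neutral element `e`; the part of the arguments in a block `s` enters only through one quantity. -/
structure IsAbstractSum {ι Q : Type} [DecidableEq ι] (S : (ι → Q) → Q) (e : Q) : Prop where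
  single : ∀ i a, S (Function.update (fun _ => e) i a) = a
  congr_block : ∀ (s : Finset ι) (n n' k k' : ι → Q),
    S (s.piecewise n k) = S (s.piecewise n' k) → S (s.piecewise n k') = S (s.piecewise n' k')
  surjective : ∀ i n, Function.Surjective fun a => S (Function.update n i a)

namespace IsAbstractSum

variable {ι Q : Type} [DecidableEq ι] {S : (ι → Q) → Q} {e : Q}

/-- The arguments `a` at `i`, `b` at `j`, and `e` elsewhere. -/
def pair (e : Q) (i : ι) (a : Q) (j : ι) (b : Q) : ι → Q :=
  Function.update (Function.update (fun _ => e) i a) j b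

lemma pair_comm {i j : ι} (hij : i ≠ j) (a b : Q) : pair e i a j b = pair e j b i a :=
  Function.update_comm hij ..

lemma update_pair_neutral {i j k : ι} (hki : k ≠ i) (hkj : k ≠ j) (a b : Q) :
    Function.update (pair e i a j b) k e = pair e i a j b := by
  simp [pair, Function.update_eq_self_iff, Function.update_of_ne, hki, hkj]

lemma congr_pair (hS : IsAbstractSum S e) {i j : ι} {n : ι → Q} (n' : ι → Q) {a b a' b' : Q}
    (h : S (Function.update (Function.update n i a) j b) =
      S (Function.update (Function.update n i a') j b')) :
    S (Function.update (Function.update n' i a) j b) =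
      S (Function.update (Function.update n' i a') j b') := by
  have hblock (n : ι → Q) (a b : Q) : Function.update (Function.update n i a) j b =
      ({i, j} : Finset ι).piecewise (fun c => if c = j then b else a) n := by
    funext c
    simp only [Function.update_apply, Finset.piecewise, Finset.mem_insert, Finset.mem_singleton]
    grind
  simp only [hblock] at h ⊢
  exact hS.congr_block _ _ _ _ _ h

lemma apply_pair_neutral (hS : IsAbstractSum S e) {i j : ι} (hij : i ≠ j) (a : Q) :
    S (pair e i a j e) = a := by
  rw [pair_comm hij, pair, Function.update_eq_self, hS.single]

lemma apply_pair_neutral_left (hS : IsAbstractSum S e) (i j : ι) (a : Q) :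
    S (pair e i e j a) = a := by
  rw [pair, Function.update_eq_self, hS.single]

lemma apply_pair_move_right (hS : IsAbstractSum S e) {i j k : ι} (hij : i ≠ j) (hik : i ≠ k)
    (hjk : j ≠ k) (a b : Q) : S (pair e i a j b) = S (pair e i a k b) := by
  have hmove := hS.congr_pair (Function.update (fun _ => e) i a)
    ((hS.apply_pair_neutral hjk b).trans (hS.apply_pair_neutral_left j k b).symm)
  have htarget : Function.update (Function.update (fun _ => e) i a) j e =
      Function.update (fun _ => e) i a := by
    simp [Function.update_eq_self_iff, Function.update_of_ne, hij.symm]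
  rw [htarget] at hmove
  rw [← update_pair_neutral hik.symm hjk.symm]
  exact hmove

lemma apply_pair_move_left (hS : IsAbstractSum S e) {i j k : ι} (hij : i ≠ j) (hik : i ≠ k)
    (hjk : j ≠ k) (a b : Q) : S (pair e i a j b) = S (pair e k a j b) := by
  rw [pair_comm hij, hS.apply_pair_move_right hij.symm hjk hik, pair_comm hjk]

lemma apply_pair_congr (hS : IsAbstractSum S e) (hthird : ∀ i j : ι, ∃ k, k ≠ i ∧ k ≠ j)
    {i j i' j' : ι} (hij : i ≠ j) (hij' : i' ≠ j') (a b : Q) :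
    S (pair e i a j b) = S (pair e i' a j' b) := by
  have hright {i j j' : ι} (hij : i ≠ j) (hij' : i ≠ j') :
      S (pair e i a j b) = S (pair e i a j' b) := by
    rcases eq_or_ne j j' with rfl | hjj'
    · rfl
    · exact hS.apply_pair_move_right hij hij' hjj' a b
  have hleft {i i' j : ι} (hij : i ≠ j) (hij' : i' ≠ j) :
      S (pair e i a j b) = S (pair e i' a j b) := by
    rcases eq_or_ne i i' with rfl | hii'
    · rfl
    · exact hS.apply_pair_move_left hij hii' hij'.symm a b
  obtain ⟨k, hkj, hkj'⟩ := hthird j j'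
  exact (hleft hij hkj).trans ((hright hkj hkj').trans (hleft hkj' hij'))

lemma apply_merge (hS : IsAbstractSum S e) {i j : ι} (hij : i ≠ j) (n : ι → Q) (a b : Q) :
    S (Function.update (Function.update n i a) j b) =
      S (Function.update (Function.update n i (S (pair e i a j b))) j e) :=
  hS.congr_pair n (hS.apply_pair_neutral hij _).symm

lemma apply_pair_assoc (hS : IsAbstractSum S e) {i j k : ι} (hij : i ≠ j) (hik : i ≠ k)
    (hjk : j ≠ k) (a b c : Q) :
    S (pair e i (S (pair e i a j b)) k c) = S (pair e i a j (S (pair e j b k c))) := by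
  have hleft := hS.apply_merge hij (Function.update (fun _ => e) k c) a b
  have hright := hS.apply_merge hjk (Function.update (fun _ => e) i a) b c
  have hdrop (x : Q) : Function.update (Function.update (Function.update (fun _ => e) k c) i x) j e
      = pair e i x k c := by
    rw [Function.update_comm hik.symm]
    exact update_pair_neutral hij.symm hjk x c
  rw [hdrop] at hleft
  rw [← hleft, ← update_pair_neutral hik.symm hjk.symm]
  refine Eq.trans ?_ hright
  rw [Function.update_comm hik.symm, Function.update_comm hjk.symm]

theorem exists_addCommGroup_pair (hS : IsAbstractSum S e)
    (hthird : ∀ i j : ι, ∃ k, k ≠ i ∧ k ≠ j) [Nonempty ι] :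
    ∃ _ : AddCommGroup Q, 0 = e ∧
      ∀ i j : ι, i ≠ j → ∀ a b : Q, S (pair e i a j b) = a + b := by
  obtain ⟨i⟩ := ‹Nonempty ι›
  obtain ⟨j, hji, -⟩ := hthird i i
  obtain ⟨k, hki, hkj⟩ := hthird i j
  let op (a b : Q) : Q := S (pair e i a j b)
  have hop {i' j' : ι} (h : i' ≠ j') (a b : Q) : S (pair e i' a j' b) = op a b :=
    hS.apply_pair_congr hthird h hji.symm a b
  have op_comm (a b : Q) : op a b = op b a :=
    (hop hji b a ▸ congrArg S (pair_comm hji.symm a b) : S (pair e i a j b) = op b a)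
  have op_assoc (a b c : Q) : op (op a b) c = op a (op b c) := by
    have h := hS.apply_pair_assoc hji.symm hki.symm hkj.symm a b c
    simpa only [hop hki.symm, hop hkj.symm] using h
  have exists_inv (a : Q) : ∃ b, op b a = e := by
    obtain ⟨b, hb⟩ := hS.surjective i (Function.update (fun _ => e) j a) e
    exact ⟨b, (congrArg S (Function.update_comm hji.symm ..)).trans hb⟩
  choose neg neg_op using exists_inv
  let _ : Add Q := ⟨op⟩
  let _ : Zero Q := ⟨e⟩
  let _ : Neg Q := ⟨neg⟩
  let group : AddGroup Q := AddGroup.ofLeftAxioms op_assoc (hS.apply_pair_neutral_left i j) neg_op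
  exact ⟨{ group with add_comm := op_comm }, rfl, fun i j h a b => hop h a b⟩

theorem exists_addCommGroup (hS : IsAbstractSum S e) [Fintype ι] [Nonempty ι]
    (hthird : ∀ i j : ι, ∃ k, k ≠ i ∧ k ≠ j) :
    ∃ _ : AddCommGroup Q, ∀ n, S n = ∑ i, n i := by
  obtain ⟨_, rfl, hpair⟩ := hS.exists_addCommGroup_pair hthird
  refine ⟨‹_›, ?_⟩
  have hblock {s : Finset ι} (hs : s.Nonempty) (n : ι → Q) :
      S (s.piecewise n fun _ => 0) = ∑ i ∈ s, n i := by
    induction hs using Finset.Nonempty.cons_induction with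
    | singleton i =>
      simp [Finset.piecewise_singleton, hS.single]
    | cons j s hj hs ih =>
      obtain ⟨i, hi⟩ := hs
      have hij : i ≠ j := fun h => hj (h ▸ hi)
      -- The block `s` may be replaced by its sum, placed at `i`.
      have hcongr := hS.congr_block s n (Function.update (fun _ => 0) i (∑ c ∈ s, n c))
        (fun _ => 0) (Function.update (fun _ => 0) j (n j)) <| by
          rw [ih, ← hS.single i (∑ c ∈ s, n c)]
          congr 1
          funext c
          by_cases hc : c = i <;> simp [Finset.piecewise, hc, hi, hS.single]
      calc S ((Finset.cons j s hj).piecewise n fun _ => 0)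
          = S (s.piecewise n (Function.update (fun _ => 0) j (n j))) := by
            congr 1
            funext c
            by_cases hc : c = j <;> simp [Finset.piecewise, hc, hj]
        _ = S (pair 0 i (∑ c ∈ s, n c) j (n j)) := by
            rw [hcongr]
            congr 1
            funext c
            simp only [Finset.piecewise, pair, Function.update_apply]
            grind
        _ = ∑ c ∈ Finset.cons j s hj, n c := by
            rw [hpair i j hij, Finset.sum_cons, add_comm]
  intro n
  rw [← hblock Finset.univ_nonempty n, Finset.piecewise_univ]

end IsAbstractSum

namespace DependencySystem

theorem exists_network (F : DependencySystem) : ∃ net : Network, NetworkValid net ∧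
    NetworkSizeLE net (F.toDemandSystem.size ^ 2) ∧
    (∀ q : ℕ, q ≠ 0 → SolvableWith net q →
      ∃ Y : F.Derived → (F.Base → Fin q) → Fin q, F.IsModel Y) ∧
    (∀ (V : Type) [AddGroup V] [Fintype V] (Y : F.Derived → (F.Base → V) → V), F.IsModel Y →
      SolvableWith net (Fintype.card V)) := by
  obtain ⟨net, hvalid, hsize, hsolv⟩ := F.toDemandSystem.exists_network
  refine ⟨net, hvalid, hsize, fun q hq h => ?_, fun V _ _ Y hY => ?_⟩
  · obtain ⟨Z, hZ⟩ := (hsolv q hq).1 h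
    exact ⟨_, DemandSystem.IsSolution.isModel_plain hZ ⟨0, Nat.pos_of_ne_zero hq⟩⟩
  · exact (hsolv _ Fintype.card_ne_zero).2
      ⟨_, hY.isSolution_padWithSum.conj (Fintype.equivFin V)⟩

variable {F : DependencySystem}

namespace IsModel

variable {Q : Type} {Y : F.Derived → (F.Base → Q) → Q}

lemma injective [DecidableEq F.Base] (hY : F.IsModel Y) {j : F.Derived} {i : F.Base}
    (hp : F.pivot j i) (m : F.Base → Q) :
    Function.Injective fun x => Y j (Function.update m i x) := by
  intro x y hxy
  have hi := hY.eq_of_agree_off hp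
    (fun b hb => (Function.update_of_ne hb x m).trans (Function.update_of_ne hb y m).symm) hxy
  simpa only [Function.update_self] using hi

lemma surjective [Finite Q] [DecidableEq F.Base] (hY : F.IsModel Y) {j : F.Derived} {i : F.Base}
    (hp : F.pivot j i) (m : F.Base → Q) :
    Function.Surjective fun x => Y j (Function.update m i x) :=
  Finite.surjective_of_injective (hY.injective hp m)

lemma relabel (hY : F.IsModel Y) {l : F.Base → Q → Q} (hl : ∀ i, Function.Injective (l i)) :
    F.IsModel fun j m => Y j fun i => l i (m i) := by
  constructor
  · intro j i hp m m' hm hval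
    exact hl i (hY.eq_of_agree_off hp (fun b hb => congrArg (l b) (hm b hb)) hval)
  · intro k m m' h
    refine hY.determines k (fun i => l i (m i)) (fun i => l i (m' i)) ?_
    rintro (b | j) hs
    · exact congrArg (l b) (h _ hs)
    · exact h _ hs

lemma of_addMonoidHom [DecidableEq F.Base] {V : Type} [AddCommGroup V]
    {Y : F.Derived → (F.Base → V) →+ V}
    (hpivot : ∀ j i, F.pivot j i → ∀ x, Y j (Pi.single i x) = 0 → x = 0)
    (hker : ∀ k m, (∀ s ∈ F.source k, valueOf (fun j => Y j) s m = 0) → Y (F.target k) m = 0) :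
    F.IsModel fun j => Y j := by
  have hvalue_sub (s : F.Base ⊕ F.Derived) (m m' : F.Base → V) :
      valueOf (fun j => Y j) s (m - m') =
        valueOf (fun j => Y j) s m - valueOf (fun j => Y j) s m' := by
    cases s with
    | inl b => rfl
    | inr j => exact map_sub (Y j) m m'
  constructor
  · intro j i hp m m' hm hval
    refine sub_eq_zero.1 (hpivot j i hp _ ?_)
    have hsub : Pi.single i (m i - m' i) = m - m' := by
      funext b
      by_cases hb : b = i
      · subst hb; simp
      · simp [hb, hm b hb]
    rw [hsub, map_sub, sub_eq_zero]
    exact hval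
  · intro k m m' h
    refine sub_eq_zero.1 ((hvalue_sub _ m m').symm.trans (hker k (m - m') fun s hs => ?_))
    rw [hvalue_sub, sub_eq_zero]
    exact h s hs

end IsModel

end DependencySystem

/-! ### Systems of bracket equations for operators -/

/-- A finite system of equations between unknown operators: `Bracket i j k` asks that the
anticommutator of the operators `i` and `j` be the operator `k`. -/
structure OperatorSystem where
  Index : Type
  [fintypeIndex : Fintype Index]
  Bracket : Index → Index → Index → Prop
  zero : Index
  one : Index

attribute [instance] OperatorSystem.fintypeIndex

namespace OperatorSystem

/-- The endomorphisms `ρ` of the elementary abelian 2-group `V` solve the system. -/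
structure IsRealization (R : OperatorSystem) {V : Type} [AddCommGroup V]
    (ρ : R.Index → AddMonoid.End V) : Prop where
  add_self : ∀ x : V, x + x = 0
  zero : ρ R.zero = 0
  one : ρ R.one = 1
  bracket : ∀ i j k, R.Bracket i j k → ρ i * ρ j + ρ j * ρ i = ρ k

/-- The sets of messages whose sum is a derived variable. -/
abbrev Block : Type := {s : Finset (Fin 5) // s.Nonempty}

/-- The block with the given elements. -/
abbrev block (s : Finset (Fin 5)) (hs : s.Nonempty := by decide) : Block := ⟨s, hs⟩

/-- The block of all messages. -/
abbrev allBlock : Block := block Finset.univ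

/-- The positions at which the graph of every operator `ρ` is recorded: at the place `p` there is a
derived variable `y + ρ x`, where `x` and `y` are the sums of the messages in `p.input` and
`p.output`. -/
inductive Place
  | at02 | at01 | at12 | at03 | at34 | at14 | at0_24 | at01_24
  deriving DecidableEq

namespace Place

instance : Fintype Place where
  elems := {at02, at01, at12, at03, at34, at14, at0_24, at01_24}
  complete p := by cases p <;> decide

/-- The block whose sum is the argument of the operator. -/
def input : Place → Block
  | at02 | at01 | at03 | at0_24 => block {0}
  | at12 | at14 => block {1}
  | at34 => block {3}
  | at01_24 => block {0, 1}

/-- The block whose sum is the value of the operator. -/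
def output : Place → Block
  | at02 | at12 => block {2}
  | at01 => block {1}
  | at03 => block {3}
  | at34 | at14 => block {4}
  | at0_24 | at01_24 => block {2, 4}

/-- A message in the output but not in the input. -/
def pivot : Place → Fin 5
  | at02 | at12 | at0_24 | at01_24 => 2
  | at01 => 1
  | at03 => 3
  | at34 | at14 => 4

/-- Blocks whose sums, in characteristic two, transfer the graph recorded at `at02` to another
place. -/
def link : Place → Set Block
  | at02 => ∅
  | at01 => {block {1, 2}}
  | at12 => {block {0, 1}}
  | at03 => {block {2, 3}}
  | at34 => {block {0, 3}, block {2, 4}}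
  | at14 => {block {0, 1}, block {2, 4}}
  | at0_24 => {block {4}}
  | at01_24 => {block {1}, block {4}}

/-- Messages certifying `ρ x = y` at the place `p`, given that it is certified at `at02`. -/
def probe {Q : Type} [Zero Q] (x y : Q) : Place → Fin 5 → Q
  | at02 | at0_24 | at01_24 => ![x, 0, y, 0, 0]
  | at01 => ![x, y, y, 0, 0]
  | at12 => ![x, x, y, 0, 0]
  | at03 => ![x, 0, y, y, 0]
  | at34 => ![x, 0, y, x, y]
  | at14 => ![x, x, y, 0, y]

lemma pivot_mem_output (p : Place) : p.pivot ∈ p.output.1 := by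
  cases p <;> decide

lemma pivot_notMem_input (p : Place) : p.pivot ∉ p.input.1 := by
  cases p <;> decide

section Probe

variable {Q : Type} [AddCommGroup Q] (x y : Q) (p : Place)

lemma probe_apply_zero : p.probe x y 0 = x := by
  cases p <;> rfl

lemma probe_apply_two : p.probe x y 2 = y := by
  cases p <;> rfl

lemma sum_input_probe : ∑ i ∈ p.input.1, p.probe x y i = x := by
  cases p <;> simp [input, probe]

lemma sum_output_probe : ∑ i ∈ p.output.1, p.probe x y i = y := by
  cases p <;> simp [output, probe]

lemma sum_link_probe (htwo : ∀ x : Q, x + x = 0) {s : Block} (hs : s ∈ p.link) :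
    ∑ i ∈ s.1, p.probe x y i = 0 := by
  cases p <;> simp only [link, Set.mem_empty_iff_false, Set.mem_insert_iff,
    Set.mem_singleton_iff] at hs <;> (try rcases hs with rfl | rfl) <;>
    simp [probe, htwo]

end Probe

end Place

/-- The derived variables encoding an operator system. -/
inductive Var (R : OperatorSystem)
  | sum (s : Block)
  | graph (r : R.Index) (p : Place)

/-- The functional dependencies encoding an operator system. The first two make the variable of the
block of all messages an abstract sum, `two` makes the resulting group have exponent two, the next
three make the graphs those of additive maps, and the last three express the equations. -/
inductive Rule (R : OperatorSystem)
  | sum (s : Block)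
  | total (s : Block)
  | two
  | graph (r : R.Index) (p : Place)
  | link (r : R.Index) (p : Place)
  | additive (r : R.Index)
  | zero
  | one
  | bracket (i j k : R.Index) (h : R.Bracket i j k)

variable (R : OperatorSystem)

/-- Enumerates the derived variables. -/
def varOfSum : Block ⊕ R.Index × Place → R.Var :=
  Sum.elim .sum fun x => .graph x.1 x.2

lemma varOfSum_surjective : Function.Surjective R.varOfSum := by
  rintro (s | ⟨r, p⟩)
  exacts [⟨.inl s, rfl⟩, ⟨.inr (r, p), rfl⟩]

/-- Enumerates the functional dependencies. -/
def ruleOfSum : (Block ⊕ Block ⊕ Fin 3) ⊕ (R.Index × Place ⊕ R.Index × Place ⊕ R.Index) ⊕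
      {t : R.Index × R.Index × R.Index // R.Bracket t.1 t.2.1 t.2.2} → R.Rule :=
  Sum.elim (Sum.elim .sum (Sum.elim .total ![.two, .zero, .one]))
    (Sum.elim
      (Sum.elim (fun x => .graph x.1 x.2) (Sum.elim (fun x => .link x.1 x.2) .additive))
      fun t => .bracket t.1.1 t.1.2.1 t.1.2.2 t.2)

lemma ruleOfSum_surjective : Function.Surjective R.ruleOfSum := by
  rintro (s | s | _ | ⟨r, p⟩ | ⟨r, p⟩ | r | _ | _ | ⟨i, j, k, h⟩)
  exacts [⟨.inl (.inl s), rfl⟩, ⟨.inl (.inr (.inl s)), rfl⟩, ⟨.inl (.inr (.inr 0)), rfl⟩,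
    ⟨.inr (.inl (.inl (r, p))), rfl⟩, ⟨.inr (.inl (.inr (.inl (r, p)))), rfl⟩,
    ⟨.inr (.inl (.inr (.inr r))), rfl⟩, ⟨.inl (.inr (.inr 1)), rfl⟩,
    ⟨.inl (.inr (.inr 2)), rfl⟩, ⟨.inr (.inr ⟨(i, j, k), h⟩), rfl⟩]

instance : Fintype R.Var := .ofSurjective _ R.varOfSum_surjective

instance : Fintype R.Rule := .ofSurjective _ R.ruleOfSum_surjective

open Place in
/-- The dependency system whose models over a finite alphabet are, up to relabelling, the
realizations of the operator system. -/
abbrev toDependencySystem : DependencySystem where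
  Base := Fin 5
  Derived := R.Var
  Rule := R.Rule
  pivot
    | .sum s, i => i ∈ s.1
    | .graph _ p, i => i = p.pivot
  exists_pivot
    | .sum s => s.2
    | .graph _ p => ⟨p.pivot, rfl⟩
  source
    | .sum s => .inl '' (s.1 : Set (Fin 5))
    | .total s => insert (.inr (.sum s)) (.inl '' (s.1 : Set (Fin 5))ᶜ)
    | .two => {.inr (.sum (block {0, 1})), .inr (.sum (block {1, 2}))}
    | .graph _ p => {.inr (.sum p.input), .inr (.sum p.output)}
    | .link r p => insert (.inr (.graph r at02)) ((fun s => .inr (.sum s)) '' p.link)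
    | .additive r => {.inr (.graph r at02), .inr (.graph r at14)}
    | .zero => {.inr (.sum (block {2, 4}))}
    | .one => {.inr (.sum (block {0, 2}))}
    | .bracket i j _ _ => {.inr (.graph j at01), .inr (.graph i at12), .inr (.graph i at03),
        .inr (.graph j at34)}
  target
    | .sum s => .sum s
    | .total _ => .sum allBlock
    | .two => .sum (block {0, 2})
    | .graph r p => .graph r p
    | .link r p => .graph r p
    | .additive r => .graph r at01_24
    | .zero => .graph R.zero at0_24
    | .one => .graph R.one at02
    | .bracket _ _ k _ => .graph k at0_24

lemma card_var_le : Fintype.card R.Var ≤ 31 + 8 * Fintype.card R.Index := by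
  refine (Fintype.card_le_of_surjective _ R.varOfSum_surjective).trans ?_
  have hBlock : Fintype.card Block = 31 := by decide
  have hPlace : Fintype.card Place = 8 := by decide
  simp only [Fintype.card_sum, Fintype.card_prod, hBlock, hPlace]
  omega

lemma card_rule_le :
    Fintype.card R.Rule ≤ 65 + 17 * Fintype.card R.Index + Fintype.card R.Index ^ 3 := by
  refine (Fintype.card_le_of_surjective _ R.ruleOfSum_surjective).trans ?_
  have hBlock : Fintype.card Block = 31 := by decide
  have hPlace : Fintype.card Place = 8 := by decide
  have hBracket := Fintype.card_subtype_le
    fun t : R.Index × R.Index × R.Index => R.Bracket t.1 t.2.1 t.2.2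
  simp only [Fintype.card_prod] at hBracket
  simp only [Fintype.card_sum, Fintype.card_prod, Fintype.card_fin, hBlock, hPlace]
  linarith

lemma size_toDependencySystem_le :
    R.toDependencySystem.toDemandSystem.size ≤ (2000 * (Fintype.card R.Index + 1)) ^ 3 := by
  have hsize := R.toDependencySystem.size_toDemandSystem_le
  have hBase : Fintype.card R.toDependencySystem.Base = 5 := Fintype.card_fin 5
  have hDerived : Fintype.card R.toDependencySystem.Derived ≤ _ := R.card_var_le
  have hRule : Fintype.card R.toDependencySystem.Rule ≤ _ := R.card_rule_le
  rw [hBase] at hsize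
  nlinarith [Nat.zero_le (Fintype.card R.Index ^ 3), Nat.zero_le (Fintype.card R.Index ^ 2)]

end OperatorSystem

namespace DependencySystem.IsModel

open OperatorSystem Place

variable {R : OperatorSystem} {Q : Type} {Y : R.Var → (Fin 5 → Q) → Q}

lemma sum_congr (hY : R.toDependencySystem.IsModel Y) {s : Block} {n n' : Fin 5 → Q}
    (h : ∀ i ∈ s.1, n i = n' i) : Y (.sum s) n = Y (.sum s) n' := by
  refine hY.determines (.sum s) n n' ?_
  rintro _ ⟨i, hi, rfl⟩
  exact h i hi

lemma total_congr (hY : R.toDependencySystem.IsModel Y) {s : Block} {n n' : Fin 5 → Q}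
    (hoff : ∀ i ∉ s.1, n i = n' i) (h : Y (.sum s) n = Y (.sum s) n') :
    Y (.sum allBlock) n = Y (.sum allBlock) n' := by
  refine hY.determines (.total s) n n' ?_
  rintro _ (rfl | ⟨i, hi, rfl⟩)
  · exact h
  · exact hoff i hi

lemma total_eq_iff [Finite Q] (hY : R.toDependencySystem.IsModel Y) {s : Block} {n n' : Fin 5 → Q}
    (hoff : ∀ i ∉ s.1, n i = n' i) :
    Y (.sum allBlock) n = Y (.sum allBlock) n' ↔
      Y (.sum s) n = Y (.sum s) n' := by
  refine ⟨fun htotal => ?_, hY.total_congr hoff⟩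
  obtain ⟨i, hi⟩ := s.2
  -- Correct `n` at `i` so that the block sums agree; the totals force the correction to vanish.
  obtain ⟨a, ha⟩ := hY.surjective (j := .sum s) (i := i) hi n (Y (.sum s) n')
  have htotal' := hY.total_congr (n := Function.update n i a) (n' := n') (fun b hb => by
    rw [Function.update_of_ne (ne_of_mem_of_not_mem hi hb).symm, hoff b hb]) ha
  have hai : Function.update n i a i = n i :=
    hY.eq_of_agree_off (j := .sum allBlock) (Finset.mem_univ i)
      (fun b hb => Function.update_of_ne hb a n) (htotal'.trans htotal.symm)
  rw [Function.update_self] at hai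
  simpa only [hai, Function.update_eq_self] using ha

lemma isAbstractSum_total [Finite Q] (hY : R.toDependencySystem.IsModel Y) {e : Q}
    (he : ∀ i a, Y (.sum allBlock) (Function.update (fun _ => e) i a) = a) :
    IsAbstractSum (Y (.sum allBlock)) e where
  single := he
  congr_block s n n' k k' h := by
    rcases s.eq_empty_or_nonempty with rfl | hs
    · simp only [Finset.piecewise_empty]
    have hoff (k : Fin 5 → Q) (i) (hi : i ∉ s) : s.piecewise n k i = s.piecewise n' k i := by
      simp only [Finset.piecewise_eq_of_notMem _ _ _ hi]
    have hcongr (n : Fin 5 → Q) : Y (.sum ⟨s, hs⟩) (s.piecewise n k) =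
        Y (.sum ⟨s, hs⟩) (s.piecewise n k') :=
      hY.sum_congr fun i hi => by
        rw [Finset.piecewise_eq_of_mem _ _ _ hi, Finset.piecewise_eq_of_mem _ _ _ hi]
    rw [hY.total_eq_iff (s := ⟨s, hs⟩) (hoff k)] at h
    rwa [hY.total_eq_iff (s := ⟨s, hs⟩) (hoff k'), ← hcongr, ← hcongr]
  surjective i := hY.surjective (j := .sum allBlock) (Finset.mem_univ i)

/-- Relabelling the messages makes the total of all messages a sum in a group. -/
lemma exists_relabel_total_eq_sum [Finite Q] [Nonempty Q] (hY : R.toDependencySystem.IsModel Y) :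
    ∃ (_ : AddCommGroup Q) (Y' : R.Var → (Fin 5 → Q) → Q), R.toDependencySystem.IsModel Y' ∧
      ∀ n, Y' (.sum allBlock) n = ∑ i, n i := by
  obtain ⟨q⟩ := ‹Nonempty Q›
  let T := Y (.sum allBlock)
  have hinj (i : Fin 5) : Function.Injective fun a => T (Function.update (fun _ => q) i a) :=
    hY.injective (j := .sum allBlock) (Finset.mem_univ i) fun _ => q
  let label (i : Fin 5) : Q ≃ Q :=
    (Equiv.ofBijective _ (Finite.injective_iff_bijective.1 (hinj i))).symm
  have hlabel (i : Fin 5) (a : Q) : T (Function.update (fun _ => q) i (label i a)) = a :=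
    (label i).symm_apply_apply a
  have hlabel_base (i : Fin 5) : label i (T fun _ => q) = q :=
    hinj i ((hlabel i _).trans (congrArg T (Function.update_eq_self i _)).symm)
  have hY' := hY.relabel (l := fun i => label i) fun i => (label i).injective
  have hsum := hY'.isAbstractSum_total (e := T fun _ => q) fun i a => by
    refine Eq.trans (congrArg T ?_) (hlabel i a)
    funext b
    by_cases hb : b = i
    · subst hb; simp
    · simp [hb, hlabel_base]
  obtain ⟨_, htotal⟩ := hsum.exists_addCommGroup (by decide)
  exact ⟨_, _, hY', htotal⟩

section Additive

variable [AddCommGroup Q]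

/-- The graph of `ρ` is the level set through `0` of the variable `graph r p`. -/
def IsGraph (Y : R.Var → (Fin 5 → Q) → Q) (r : R.Index) (p : Place) (ρ : Q → Q) : Prop :=
  ∀ n, Y (.graph r p) n = Y (.graph r p) 0 ↔ ∑ i ∈ p.output.1, n i = ρ (∑ i ∈ p.input.1, n i)

variable {ρ : R.Index → Q → Q}

section Finite

variable [Finite Q]

lemma sum_eq_iff (hY : R.toDependencySystem.IsModel Y)
    (htotal : ∀ n, Y (.sum allBlock) n = ∑ i, n i) {s : Block} {n n' : Fin 5 → Q} :
    Y (.sum s) n = Y (.sum s) n' ↔ ∑ i ∈ s.1, n i = ∑ i ∈ s.1, n' i := by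
  have hrestrict (n : Fin 5 → Q) : Y (.sum s) n = Y (.sum s) (s.1.piecewise n 0) :=
    hY.sum_congr fun i hi => (Finset.piecewise_eq_of_mem _ _ _ hi).symm
  have hsum (n : Fin 5 → Q) : ∑ i, s.1.piecewise n 0 i = ∑ i ∈ s.1, n i := by
    simp [Finset.sum_piecewise]
  rw [hrestrict n, hrestrict n', ← hY.total_eq_iff, htotal, htotal, hsum, hsum]
  intro i hi
  simp only [Finset.piecewise_eq_of_notMem _ _ _ hi]

lemma add_self (hY : R.toDependencySystem.IsModel Y)
    (htotal : ∀ n, Y (.sum allBlock) n = ∑ i, n i) (x : Q) : x + x = 0 := by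
  have h := hY.determines .two ![x, -x, x, 0, 0] 0 <| by
    rintro _ (rfl | rfl) <;> exact (hY.sum_eq_iff htotal).2 (by simp)
  simpa using (hY.sum_eq_iff htotal).1 h

lemma graph_congr (hY : R.toDependencySystem.IsModel Y)
    (htotal : ∀ n, Y (.sum allBlock) n = ∑ i, n i) {r : R.Index} {p : Place}
    {n n' : Fin 5 → Q} (hinput : ∑ i ∈ p.input.1, n i = ∑ i ∈ p.input.1, n' i)
    (houtput : ∑ i ∈ p.output.1, n i = ∑ i ∈ p.output.1, n' i) :
    Y (.graph r p) n = Y (.graph r p) n' := by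
  refine hY.determines (.graph r p) n n' ?_
  rintro _ (rfl | rfl)
  · exact (hY.sum_eq_iff htotal).2 hinput
  · exact (hY.sum_eq_iff htotal).2 houtput

lemma sum_output_eq (hY : R.toDependencySystem.IsModel Y)
    (htotal : ∀ n, Y (.sum allBlock) n = ∑ i, n i) {r : R.Index} {p : Place}
    {n n' : Fin 5 → Q} (hinput : ∑ i ∈ p.input.1, n i = ∑ i ∈ p.input.1, n' i)
    (hgraph : Y (.graph r p) n = Y (.graph r p) n') :
    ∑ i ∈ p.output.1, n i = ∑ i ∈ p.output.1, n' i := by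
  let d := ∑ i ∈ p.output.1, n' i - ∑ i ∈ p.output.1, n i
  let k : Fin 5 → Q := n + Pi.single p.pivot d
  have hinput' : ∑ i ∈ p.input.1, k i = ∑ i ∈ p.input.1, n' i := by
    simp [k, Finset.sum_add_distrib, p.pivot_notMem_input, hinput]
  have houtput' : ∑ i ∈ p.output.1, k i = ∑ i ∈ p.output.1, n' i := by
    simp [k, Finset.sum_add_distrib, p.pivot_mem_output, d]
  have hpivot : k p.pivot = n p.pivot := hY.eq_of_agree_off (j := .graph r p) rfl
    (fun b hb => by simp [k, hb]) ((hY.graph_congr htotal hinput' houtput').trans hgraph.symm)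
  have hd : d = 0 := by simpa [k] using hpivot
  exact (sub_eq_zero.1 hd).symm

lemma isGraph_of_exists (hY : R.toDependencySystem.IsModel Y)
    (htotal : ∀ n, Y (.sum allBlock) n = ∑ i, n i) {r : R.Index} {p : Place} {ρ : Q → Q}
    (h : ∀ x, ∃ n, Y (.graph r p) n = Y (.graph r p) 0 ∧ ∑ i ∈ p.input.1, n i = x ∧
      ∑ i ∈ p.output.1, n i = ρ x) : IsGraph Y r p ρ := by
  intro n'
  obtain ⟨n, hn, hinput, houtput⟩ := h (∑ i ∈ p.input.1, n' i)
  rw [← hn, ← houtput]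
  exact ⟨hY.sum_output_eq htotal hinput.symm, hY.graph_congr htotal hinput.symm⟩

lemma exists_isGraph (hY : R.toDependencySystem.IsModel Y)
    (htotal : ∀ n, Y (.sum allBlock) n = ∑ i, n i) (r : R.Index) :
    ∃ ρ, IsGraph Y r at02 ρ := by
  have hsurj (x : Q) : ∃ y, Y (.graph r at02) ![x, 0, y, 0, 0] = Y (.graph r at02) 0 := by
    obtain ⟨y, hy⟩ :=
      hY.surjective (j := .graph r at02) (i := 2) rfl ![x, 0, 0, 0, 0] (Y (.graph r at02) 0)
    have hupdate : Function.update ![x, 0, 0, 0, 0] 2 y = ![x, 0, y, 0, 0] := by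
      funext i
      fin_cases i <;> rfl
    exact ⟨y, hupdate ▸ hy⟩
  choose ρ hρ using hsurj
  refine ⟨ρ, hY.isGraph_of_exists htotal fun x => ⟨_, hρ x, ?_, ?_⟩⟩
  · exact sum_input_probe x (ρ x) at02
  · exact sum_output_probe x (ρ x) at02

lemma isGraph_of_isGraph_at02 (hY : R.toDependencySystem.IsModel Y)
    (htotal : ∀ n, Y (.sum allBlock) n = ∑ i, n i) {r : R.Index} {ρ : Q → Q}
    (hρ : IsGraph Y r at02 ρ) (p : Place) : IsGraph Y r p ρ := by
  refine hY.isGraph_of_exists htotal fun x =>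
    ⟨p.probe x (ρ x), ?_, p.sum_input_probe x _, p.sum_output_probe x _⟩
  refine hY.determines (.link r p) _ _ ?_
  rintro _ (rfl | ⟨s, hs, rfl⟩)
  · refine (hρ _).2 ?_
    simp only [input, output, Finset.sum_singleton, probe_apply_zero, probe_apply_two]
  · refine (hY.sum_eq_iff htotal).2 ?_
    simp only [p.sum_link_probe x _ (hY.add_self htotal) hs, Pi.zero_apply, Finset.sum_const_zero]

lemma apply_zero_index (hY : R.toDependencySystem.IsModel Y)
    (htotal : ∀ n, Y (.sum allBlock) n = ∑ i, n i) (hρ : ∀ r p, IsGraph Y r p (ρ r)) (x : Q) :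
    ρ R.zero x = 0 := by
  have h := hY.determines .zero ![x, 0, 0, 0, 0] 0 <| by
    rintro _ rfl
    exact (hY.sum_eq_iff htotal).2 (by simp)
  simpa [input, output] using ((hρ R.zero at0_24 _).1 h).symm

lemma apply_one_index (hY : R.toDependencySystem.IsModel Y)
    (htotal : ∀ n, Y (.sum allBlock) n = ∑ i, n i) (hρ : ∀ r p, IsGraph Y r p (ρ r)) (x : Q) :
    ρ R.one x = x := by
  have h := hY.determines .one ![x, 0, x, 0, 0] 0 <| by
    rintro _ rfl
    exact (hY.sum_eq_iff htotal).2 (by simp [hY.add_self htotal])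
  simpa [input, output] using ((hρ R.one at02 _).1 h).symm

end Finite

lemma apply_add (hY : R.toDependencySystem.IsModel Y) (hρ : ∀ r p, IsGraph Y r p (ρ r))
    (r : R.Index) (x y : Q) : ρ r (x + y) = ρ r x + ρ r y := by
  have h := hY.determines (.additive r) ![x, y, ρ r x, 0, ρ r y] 0 <| by
    rintro _ (rfl | rfl) <;> exact (hρ r _ _).2 (by simp [input, output])
  simpa [input, output] using ((hρ r at01_24 _).1 h).symm

lemma apply_bracket (hY : R.toDependencySystem.IsModel Y) (hρ : ∀ r p, IsGraph Y r p (ρ r))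
    {i j k : R.Index} (hijk : R.Bracket i j k) (x : Q) :
    ρ i (ρ j x) + ρ j (ρ i x) = ρ k x := by
  have h := hY.determines (.bracket i j k hijk)
    ![x, ρ j x, ρ i (ρ j x), ρ i x, ρ j (ρ i x)] 0 <| by
      rintro _ (rfl | rfl | rfl | rfl) <;> exact (hρ _ _ _).2 (by simp [input, output])
  simpa [input, output] using (hρ k at0_24 _).1 h

end Additive

theorem exists_isRealization [Finite Q] [Nonempty Q] (hY : R.toDependencySystem.IsModel Y) :
    ∃ (_ : AddCommGroup Q) (ρ : R.Index → AddMonoid.End Q), R.IsRealization ρ := by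
  obtain ⟨_, Y', hY', htotal⟩ := hY.exists_relabel_total_eq_sum
  choose ρ hρ02 using hY'.exists_isGraph htotal
  have hρ r p := hY'.isGraph_of_isGraph_at02 htotal (hρ02 r) p
  exact ⟨_, fun r => AddMonoidHom.mk' (ρ r) (hY'.apply_add hρ r),
    { add_self := hY'.add_self htotal
      zero := AddMonoidHom.ext (hY'.apply_zero_index htotal hρ)
      one := AddMonoidHom.ext (hY'.apply_one_index htotal hρ)
      bracket := fun _ _ _ h => AddMonoidHom.ext (hY'.apply_bracket hρ h) }⟩

end DependencySystem.IsModel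

namespace OperatorSystem

variable {R : OperatorSystem} {V : Type} [AddCommGroup V] {ρ : R.Index → AddMonoid.End V}

/-- The sum of the messages in a block. -/
def blockSum (s : Finset (Fin 5)) : (Fin 5 → V) →+ V :=
  ∑ i ∈ s, Pi.evalAddMonoidHom _ i

/-- The intended values of the derived variables for a solution `ρ` of the operator system. -/
def linearModel (ρ : R.Index → AddMonoid.End V) : R.Var → (Fin 5 → V) →+ V
  | .sum s => blockSum s.1
  | .graph r p => blockSum p.output.1 + (ρ r).comp (blockSum p.input.1)

lemma linearModel_sum (s : Block) (n : Fin 5 → V) :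
    linearModel ρ (.sum s) n = ∑ i ∈ s.1, n i := by
  simp [linearModel, blockSum]

lemma linearModel_graph (r : R.Index) (p : Place) (n : Fin 5 → V) :
    linearModel ρ (.graph r p) n = ∑ i ∈ p.output.1, n i + ρ r (∑ i ∈ p.input.1, n i) := by
  change blockSum p.output.1 n + ρ r (blockSum p.input.1 n) = _
  simp [blockSum]

lemma eq_zero_of_linearModel_single_eq_zero {v : R.Var} {i : Fin 5}
    (hi : R.toDependencySystem.pivot v i) {x : V}
    (hx : linearModel ρ v (Pi.single i x) = 0) : x = 0 := by
  cases v with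
  | sum s =>
    have hi : i ∈ s.1 := hi
    simpa [linearModel_sum, Finset.sum_pi_single, hi] using hx
  | graph r p =>
    obtain rfl : i = p.pivot := hi
    simpa [linearModel_graph, Finset.sum_pi_single, p.pivot_mem_output,
      p.pivot_notMem_input] using hx

lemma IsRealization.add_eq_zero_iff (hρ : R.IsRealization ρ) {x y : V} : x + y = 0 ↔ x = y := by
  rw [add_eq_zero_iff_eq_neg, neg_eq_of_add_eq_zero_left (hρ.add_self y)]

lemma IsRealization.linearModel_graph_eq_zero_iff (hρ : R.IsRealization ρ) (r : R.Index)
    (p : Place) (n : Fin 5 → V) : linearModel ρ (.graph r p) n = 0 ↔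
      ∑ i ∈ p.output.1, n i = ρ r (∑ i ∈ p.input.1, n i) := by
  rw [linearModel_graph, hρ.add_eq_zero_iff]

lemma IsRealization.linearModel_link (hρ : R.IsRealization ρ) {r : R.Index} {p : Place}
    {n : Fin 5 → V} (hgraph : linearModel ρ (.graph r .at02) n = 0)
    (hlink : ∀ s ∈ p.link, linearModel ρ (.sum s) n = 0) :
    linearModel ρ (.graph r p) n = 0 := by
  rw [hρ.linearModel_graph_eq_zero_iff] at hgraph ⊢
  simp only [linearModel_sum] at hlink
  cases p <;> simp_all [Place.link, Place.input, Place.output, hρ.add_eq_zero_iff] <;>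
    grind

lemma IsRealization.linearModel_bracket (hρ : R.IsRealization ρ) {i j k : R.Index}
    (hijk : R.Bracket i j k) {n : Fin 5 → V}
    (h01 : linearModel ρ (.graph j .at01) n = 0) (h12 : linearModel ρ (.graph i .at12) n = 0)
    (h03 : linearModel ρ (.graph i .at03) n = 0) (h34 : linearModel ρ (.graph j .at34) n = 0) :
    linearModel ρ (.graph k .at0_24) n = 0 := by
  rw [hρ.linearModel_graph_eq_zero_iff] at h01 h12 h03 h34 ⊢
  simp only [Place.input, Place.output, Finset.sum_singleton] at h01 h12 h03 h34 ⊢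
  rw [Finset.sum_pair (by decide), h12, h01, h34, h03, ← hρ.bracket i j k hijk]
  rfl

lemma IsRealization.linearModel_target (hρ : R.IsRealization ρ) (k : R.Rule) {n : Fin 5 → V}
    (h : ∀ s ∈ R.toDependencySystem.source k, valueOf (fun v => linearModel ρ v) s n = 0) :
    linearModel ρ (R.toDependencySystem.target k) n = 0 := by
  have hvar (v : R.Var) (hv : .inr v ∈ R.toDependencySystem.source k) : linearModel ρ v n = 0 :=
    h (.inr v) hv
  have hmessage (i : Fin 5) (hi : .inl i ∈ R.toDependencySystem.source k) : n i = 0 := h (.inl i) hi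
  cases k with
  | sum s =>
    rw [linearModel_sum]
    exact Finset.sum_eq_zero fun i hi => hmessage i ⟨i, hi, rfl⟩
  | total s =>
    have hs := hvar (.sum s) (.inl rfl)
    rw [linearModel_sum] at hs ⊢
    rw [← hs]
    exact (Finset.sum_subset (Finset.subset_univ _) fun i _ hi =>
      hmessage i (.inr ⟨i, hi, rfl⟩)).symm
  | two =>
    have h01 := hvar (.sum (block {0, 1})) (.inl rfl)
    have h12 := hvar (.sum (block {1, 2})) (.inr rfl)
    simp_all [linearModel_sum, hρ.add_eq_zero_iff]
  | graph r p =>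
    have hinput := hvar (.sum p.input) (.inl rfl)
    have houtput := hvar (.sum p.output) (.inr rfl)
    simp_all [linearModel_sum, linearModel_graph]
  | link r p =>
    exact hρ.linearModel_link (hvar _ (.inl rfl)) fun s hs => hvar _ (.inr ⟨s, hs, rfl⟩)
  | additive r =>
    have h02 := hvar (.graph r .at02) (.inl rfl)
    have h14 := hvar (.graph r .at14) (.inr rfl)
    simp_all [hρ.linearModel_graph_eq_zero_iff, Place.input, Place.output]
  | zero =>
    have h24 := hvar (.sum (block {2, 4})) rfl
    simp_all [linearModel_sum, linearModel_graph, Place.output, hρ.zero]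
  | one =>
    have h02 := hvar (.sum (block {0, 2})) rfl
    simp_all [linearModel_sum, hρ.linearModel_graph_eq_zero_iff, Place.input, Place.output, hρ.one,
      hρ.add_eq_zero_iff]
  | bracket i j k hijk =>
    exact hρ.linearModel_bracket hijk (hvar _ (.inl rfl)) (hvar _ (.inr (.inl rfl)))
      (hvar _ (.inr (.inr (.inl rfl)))) (hvar _ (.inr (.inr (.inr rfl))))

theorem IsRealization.isModel_linearModel (hρ : R.IsRealization ρ) :
    R.toDependencySystem.IsModel fun v => linearModel ρ v :=
  .of_addMonoidHom (F := R.toDependencySystem)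
    (fun _ _ hi _ => eq_zero_of_linearModel_single_eq_zero hi)
    fun k _ => hρ.linearModel_target k

theorem exists_network (R : OperatorSystem) : ∃ net : Network, NetworkValid net ∧
    NetworkSizeLE net ((2000 * (Fintype.card R.Index + 1)) ^ 6) ∧
    (∀ q : ℕ, q ≠ 0 → SolvableWith net q → ∃ (_ : AddCommGroup (Fin q))
      (ρ : R.Index → AddMonoid.End (Fin q)), R.IsRealization ρ) ∧
    (∀ (V : Type) [AddCommGroup V] [Fintype V] (ρ : R.Index → AddMonoid.End V),
      R.IsRealization ρ → SolvableWith net (Fintype.card V)) := by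
  obtain ⟨net, hvalid, hsize, hmodel, hsolv⟩ := R.toDependencySystem.exists_network
  refine ⟨net, hvalid, networkSizeLE_mono hsize ?_, fun q hq h => ?_, fun V _ _ ρ hρ =>
    hsolv V _ hρ.isModel_linearModel⟩
  · rw [pow_mul _ 3 2]
    exact Nat.pow_le_pow_left R.size_toDependencySystem_le 2
  · obtain ⟨Y, hY⟩ := hmodel q hq h
    have : Nonempty (Fin q) := ⟨⟨0, Nat.pos_of_ne_zero hq⟩⟩
    exact hY.exists_isRealization

end OperatorSystem

/-! ### Stack machines -/

/-- A letter of the words describing stacks: a symbol on the stack `k`, or the marker `(k, none)`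
of the bottom of the stack `k`. -/
abbrev Letter (Stack Symbol : Type) : Type := Stack × Option Symbol

/-- The part of a configuration that takes part in a computation step: the state and at most one
letter. -/
abbrev Pattern (State Stack Symbol : Type) : Type := State × Option (Letter Stack Symbol)

/-- The configuration consisting of a pattern and the remaining contents `β` of the stacks. A bottom
marker can only be put on an empty stack. -/
def Pattern.fill {State Stack Symbol : Type} (β : Stack → List Symbol) :
    Pattern State Stack Symbol → Option (State × (Stack → List Symbol))
  | (p, none) => some (p, β)
  | (p, some (k, some a)) => some (p, Function.update β k (a :: β k))
  | (p, some (k, none)) => if β k = [] then some (p, β) else none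

/-- A deterministic machine with several stacks whose steps are given by rules that replace a
pattern by another one. -/
structure StackMachine where
  State : Type
  Stack : Type
  Symbol : Type
  [fintypeState : Fintype State]
  [fintypeStack : Fintype Stack]
  [fintypeSymbol : Fintype Symbol]
  step : State × (Stack → List Symbol) → Option (State × (Stack → List Symbol))
  Rule : Pattern State Stack Symbol → Pattern State Stack Symbol → Prop
  bottom_iff : ∀ {u u'}, Rule u u' → ∀ k, u.2 = some (k, none) ↔ u'.2 = some (k, none)
  sound : ∀ {u u'}, Rule u u' → ∀ β, (Pattern.fill β u).bind step = Pattern.fill β u'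
  complete : ∀ {c c'}, step c = some c' →
    ∃ u u' β, Rule u u' ∧ Pattern.fill β u = some c ∧ Pattern.fill β u' = some c'

attribute [instance] StackMachine.fintypeState StackMachine.fintypeStack
  StackMachine.fintypeSymbol

namespace StackMachine

variable (M : StackMachine)

/-- The configurations of the machine. -/
abbrev Config : Type := M.State × (M.Stack → List M.Symbol)

/-- The letters of the machine. -/
abbrev MLetter : Type := Letter M.Stack M.Symbol

/-- The patterns of the machine. -/
abbrev MPattern : Type := Pattern M.State M.Stack M.Symbol

variable {M}

/-- The machine halts after exactly `d` steps. -/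
def Halts : ℕ → M.Config → Prop
  | 0, c => M.step c = none
  | d + 1, c => ∃ c', M.step c = some c' ∧ Halts d c'

/-- The word describing a stack, top first. -/
def stackWord (k : M.Stack) (l : List M.Symbol) : List M.MLetter :=
  l.map (fun a => (k, some a)) ++ [(k, none)]

/-- The word describing the stacks in `ks`. -/
def stacksWord (β : M.Stack → List M.Symbol) (ks : List M.Stack) : List M.MLetter :=
  ks.flatMap fun k => stackWord k (β k)

/-- The word describing all the stacks. -/
def configWord (β : M.Stack → List M.Symbol) : List M.MLetter :=
  stacksWord β Finset.univ.toList

lemma fst_eq_of_mem_stackWord {k : M.Stack} {w : List M.Symbol} {l : M.MLetter}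
    (h : l ∈ stackWord k w) : l.1 = k := by
  simp only [stackWord, List.mem_append, List.mem_map, List.mem_singleton] at h
  rcases h with ⟨a, _, rfl⟩ | rfl <;> rfl

/-! ### The operator system of a stack machine -/

/-- The unknown operators of the operator system of a machine: `time` undoes a computation step,
`letter l` writes a letter, `pattern u` stands for a pattern, `word i` for the pattern of the
initial state followed by the first `i + 1` letters of the initial word `w`, and `detector` ensures
that the operator of the initial configuration does not vanish. -/
inductive Operator (M : StackMachine) (w : List M.MLetter)
  | zero | one | time | detector
  | letter (l : M.MLetter)
  | pattern (u : M.MPattern)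
  | word (i : Fin (w.length + 1))

namespace Operator

/-- Enumerates the operators. -/
def ofSum {w : List M.MLetter} :
    Fin 4 ⊕ M.MLetter ⊕ M.MPattern ⊕ Fin (w.length + 1) → M.Operator w :=
  Sum.elim ![zero, one, time, detector] (Sum.elim letter (Sum.elim pattern word))

lemma ofSum_surjective {w : List M.MLetter} : Function.Surjective (ofSum (w := w)) := by
  rintro (_ | _ | _ | _ | l | u | i)
  exacts [⟨.inl 0, rfl⟩, ⟨.inl 1, rfl⟩, ⟨.inl 2, rfl⟩, ⟨.inl 3, rfl⟩, ⟨.inr (.inl l), rfl⟩,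
    ⟨.inr (.inr (.inl u)), rfl⟩, ⟨.inr (.inr (.inr i)), rfl⟩]

instance {w : List M.MLetter} : Fintype (M.Operator w) := .ofSurjective _ ofSum_surjective

lemma card_le (w : List M.MLetter) : Fintype.card (M.Operator w) ≤
    Fintype.card M.MLetter + Fintype.card M.MPattern + w.length + 5 := by
  refine (Fintype.card_le_of_surjective _ ofSum_surjective).trans ?_
  simp only [Fintype.card_sum, Fintype.card_fin]
  omega

/-- The operator of the initial state `p₀` followed by the first `i` letters of the initial
word. -/
def initial (p₀ : M.State) {w : List M.MLetter} : ℕ → M.Operator w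
  | 0 => pattern (p₀, none)
  | i + 1 => word (Fin.ofNat _ i)

end Operator

open Operator in
/-- The equations of the operator system of a machine started in the state `p₀` with the stacks
described by `w`. -/
inductive Equation (p₀ : M.State) (w : List M.MLetter) :
    M.Operator w → M.Operator w → M.Operator w → Prop
  | write (p l) : Equation p₀ w (letter l) (pattern (p, none)) (pattern (p, some l))
  | letter_comm (l l' : M.MLetter) : l.1 ≠ l'.1 → Equation p₀ w (letter l) (letter l') zero
  | time_comm (l) : Equation p₀ w time (letter l) zero
  | rule (u u') : M.Rule u u' → Equation p₀ w time (pattern u') (pattern u)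
  | extend (i : ℕ) (h : i < w.length) :
      Equation p₀ w (letter w[i]) (initial p₀ i) (initial p₀ (i + 1))
  | time_initial : Equation p₀ w time (initial p₀ w.length) zero
  | detect : Equation p₀ w detector (initial p₀ w.length) one

variable (M) in
/-- The operator system of a machine. The operator of a configuration is the image under `time` of
the operator of the next one, and `time` kills the operator of the initial configuration. Hence a
realization detects the length of the computation. -/
abbrev toOperatorSystem (p₀ : M.State) (w : List M.MLetter) : OperatorSystem where
  Index := M.Operator w
  Bracket := Equation p₀ w
  zero := .zero
  one := .one

section WordOperator

variable {A : Type} [Monoid A] (s : M.MLetter → A)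

/-- The product of the operators of the letters of a word, the first letter acting first. -/
def wordOperator (w : List M.MLetter) : A :=
  (w.map s).reverse.prod

lemma wordOperator_append (w w' : List M.MLetter) :
    wordOperator s (w ++ w') = wordOperator s w' * wordOperator s w := by
  simp [wordOperator]

lemma wordOperator_singleton (l : M.MLetter) : wordOperator s [l] = s l := by
  simp [wordOperator]

lemma wordOperator_cons (l : M.MLetter) (w : List M.MLetter) :
    wordOperator s (l :: w) = wordOperator s w * s l := by
  simp [wordOperator]

variable {s}

lemma commute_wordOperator {x : A} {w : List M.MLetter} (h : ∀ l ∈ w, Commute x (s l)) :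
    Commute x (wordOperator s w) :=
  Commute.list_prod_right _ _ fun y hy => by
    obtain ⟨l, hl, rfl⟩ := List.mem_map.1 (List.mem_reverse.1 hy)
    exact h l hl

lemma exists_wordOperator_stacksWord_update (hs : ∀ l l', l.1 ≠ l'.1 → Commute (s l) (s l'))
    {τ : A} (hτ : ∀ l, Commute τ (s l)) (β : M.Stack → List M.Symbol) {k : M.Stack}
    {ks : List M.Stack} (hk : k ∈ ks) (hnodup : ks.Nodup) :
    ∃ g : A, Commute τ g ∧ ∀ l, wordOperator s (stacksWord (Function.update β k l) ks) =
      g * wordOperator s (stackWord k l) := by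
  induction ks with
  | nil => exact absurd hk List.not_mem_nil
  | cons j ks ih =>
    have hcons (β : M.Stack → List M.Symbol) : wordOperator s (stacksWord β (j :: ks)) =
        wordOperator s (stacksWord β ks) * wordOperator s (stackWord j (β j)) :=
      wordOperator_append s _ _
    obtain ⟨hj, hnodup⟩ := List.nodup_cons.1 hnodup
    rcases eq_or_ne k j with rfl | hkj
    · refine ⟨wordOperator s (stacksWord β ks), commute_wordOperator fun l _ => hτ l, fun l => ?_⟩
      have hoff : stacksWord (Function.update β k l) ks = stacksWord β ks :=
        List.flatMap_congr fun i hi => by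
          rw [Function.update_of_ne (ne_of_mem_of_not_mem hi hj)]
      rw [hcons, Function.update_self, hoff]
    · obtain ⟨g, hg, hupdate⟩ := ih (List.mem_of_ne_of_mem hkj hk) hnodup
      refine ⟨g * wordOperator s (stackWord j (β j)),
        hg.mul_right (commute_wordOperator fun l _ => hτ l), fun l => ?_⟩
      have hcomm : Commute (wordOperator s (stackWord k l)) (wordOperator s (stackWord j (β j))) :=
        commute_wordOperator fun a ha => (commute_wordOperator fun b hb => hs _ _ <| by
          rwa [fst_eq_of_mem_stackWord ha, fst_eq_of_mem_stackWord hb, ne_comm]).symm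
      rw [hcons, hupdate, Function.update_of_ne hkj.symm, mul_assoc, hcomm.eq, mul_assoc]

end WordOperator

end StackMachine

section Adjoint

variable {R : Type} [Ring R]

/-- The map `y ↦ x * y + y * x`, which in characteristic two is the adjoint action of `x`. -/
def adjoint (x : R) : AddMonoid.End R :=
  AddMonoidHom.mulLeft x + AddMonoidHom.mulRight x

lemma adjoint_apply (x y : R) : adjoint x y = x * y + y * x := rfl

lemma commute_adjoint {x x' : R} (h : Commute x x') : Commute (adjoint x) (adjoint x') := by
  refine AddMonoidHom.ext fun y => ?_
  change adjoint x (adjoint x' y) = adjoint x' (adjoint x y)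
  have hleft : x * (x' * y) = x' * (x * y) := by rw [← mul_assoc, h.eq, mul_assoc]
  have hright : y * x' * x = y * x * x' := by rw [mul_assoc, ← h.eq, mul_assoc]
  simp only [adjoint_apply, mul_add, add_mul, hleft, hright, mul_assoc]
  abel

end Adjoint

lemma lt_card_of_pow_apply_ne_zero {A : Type} [AddCommGroup A] [Finite A] {f : AddMonoid.End A}
    {x : A} {n : ℕ} (hne : (f ^ n) x ≠ 0) (hzero : (f ^ (n + 1)) x = 0) : n < Nat.card A := by
  have hpow (i j : ℕ) : (f ^ i) ((f ^ j) x) = (f ^ (i + j)) x := by rw [pow_add]; rfl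
  have hvanish {j : ℕ} (hj : n < j) : (f ^ j) x = 0 := by
    obtain ⟨i, rfl⟩ := Nat.exists_eq_add_of_le' hj
    rw [← hpow, hzero, map_zero]
  have hne_of_lt {i j : ℕ} (hij : i < j) (hj : j ≤ n) : (f ^ i) x ≠ (f ^ j) x := by
    intro heq
    have hshift := congrArg (f ^ (n - i)) heq
    rw [hpow, hpow, Nat.sub_add_cancel (hij.le.trans hj),
      hvanish (j := n - i + j) (by omega)] at hshift
    exact hne hshift
  have hinj : Function.Injective fun i : Fin (n + 1) => (f ^ (i : ℕ)) x := by
    intro i j heq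
    by_contra hij
    rcases lt_or_gt_of_ne hij with h | h
    · exact hne_of_lt h j.is_le heq
    · exact hne_of_lt h i.is_le heq.symm
  simpa using Nat.card_le_card_of_injective _ hinj

lemma card_addMonoidEnd_fin_le {q : ℕ} [AddCommGroup (Fin q)] :
    Nat.card (AddMonoid.End (Fin q)) ≤ q ^ q := by
  simpa using Nat.card_le_card_of_injective
    (fun f : AddMonoid.End (Fin q) => (f : Fin q → Fin q)) DFunLike.coe_injective

namespace StackMachine

/-! ### Realizations have long nilpotent chains -/

section LowerBound

variable {M : StackMachine} {p₀ : M.State} {w : List M.MLetter} {V : Type} [AddCommGroup V]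
  {ρ : M.Operator w → AddMonoid.End V}

variable (ρ) in
/-- The adjoint action of the operator of a letter. -/
def letterAction (l : M.MLetter) : AddMonoid.End (AddMonoid.End V) :=
  adjoint (ρ (.letter l))

variable (ρ) in
/-- The adjoint action of the operator of time. -/
def timeAction : AddMonoid.End (AddMonoid.End V) :=
  adjoint (ρ .time)

variable (ρ) in
/-- The operator of a configuration: the operator of its state, to which the adjoint actions of the
letters of its stacks are applied. -/
def configOperator (c : M.Config) : AddMonoid.End V :=
  wordOperator (letterAction ρ) (configWord c.2) (ρ (.pattern (c.1, none)))

variable (hρ : (M.toOperatorSystem p₀ w).IsRealization ρ)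
include hρ

lemma adjoint_apply_eq {i j k : M.Operator w} (h : Equation p₀ w i j k) :
    adjoint (ρ i) (ρ j) = ρ k :=
  hρ.bracket i j k h

lemma commute_of_equation_zero {i j : M.Operator w} (h : Equation p₀ w i j .zero) :
    Commute (ρ i) (ρ j) := by
  refine AddMonoidHom.ext fun v => ?_
  have hsum : ρ i (ρ j v) + ρ j (ρ i v) = 0 :=
    DFunLike.congr_fun ((hρ.bracket i j _ h).trans hρ.zero) v
  change ρ i (ρ j v) = ρ j (ρ i v)
  rw [eq_neg_of_add_eq_zero_left hsum, ← eq_neg_of_add_eq_zero_left (hρ.add_self (ρ j (ρ i v)))]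

lemma commute_letterAction {l l' : M.MLetter} (h : l.1 ≠ l'.1) :
    Commute (letterAction ρ l) (letterAction ρ l') :=
  commute_adjoint (commute_of_equation_zero hρ (.letter_comm l l' h))

lemma commute_timeAction_letterAction (l : M.MLetter) :
    Commute (timeAction ρ) (letterAction ρ l) :=
  commute_adjoint (commute_of_equation_zero hρ (.time_comm l))

lemma letterAction_pattern (p : M.State) (l : M.MLetter) :
    letterAction ρ l (ρ (.pattern (p, none))) = ρ (.pattern (p, some l)) :=
  adjoint_apply_eq hρ (.write p l)

lemma exists_wordOperator_configWord_update (β : M.Stack → List M.Symbol) (k : M.Stack) :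
    ∃ g, Commute (timeAction ρ) g ∧ ∀ l, wordOperator (letterAction ρ)
      (configWord (Function.update β k l)) = g * wordOperator (letterAction ρ) (stackWord k l) :=
  exists_wordOperator_stacksWord_update (fun _ _ => commute_letterAction hρ)
    (commute_timeAction_letterAction hρ) β (Finset.mem_toList.2 (Finset.mem_univ k))
    (Finset.nodup_toList _)

lemma configOperator_of_fill {u : M.MPattern} (hu : ∀ k, u.2 ≠ some (k, none))
    {β : M.Stack → List M.Symbol} {c : M.Config} (hc : u.fill β = some c) :
    configOperator ρ c = wordOperator (letterAction ρ) (configWord β) (ρ (.pattern u)) := by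
  obtain ⟨p, _ | ⟨k, _ | a⟩⟩ := u
  · cases hc
    rfl
  · exact absurd rfl (hu k)
  · cases hc
    obtain ⟨g, -, hg⟩ := exists_wordOperator_configWord_update hρ β k
    have hpush : stackWord k (a :: β k) = (k, some a) :: stackWord k (β k) := rfl
    have hβ := hg (β k)
    rw [Function.update_eq_self] at hβ
    rw [configOperator, hg, hpush, wordOperator_cons, ← mul_assoc, ← hβ,
      ← letterAction_pattern hρ]
    rfl

lemma exists_configOperator_of_fill_bottom (β : M.Stack → List M.Symbol) (k : M.Stack) :
    ∃ g, Commute (timeAction ρ) g ∧ ∀ (u : M.MPattern) (c : M.Config), u.2 = some (k, none) →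
      u.fill β = some c → configOperator ρ c = g (ρ (.pattern u)) := by
  obtain ⟨g, hcomm, hg⟩ := exists_wordOperator_configWord_update hρ β k
  refine ⟨g, hcomm, ?_⟩
  rintro ⟨p, _⟩ c rfl hc
  obtain ⟨hempty, hc⟩ : β k = [] ∧ some (p, β) = some c := by
    simpa [Pattern.fill] using hc
  cases hc
  have hβ := hg []
  rw [← hempty, Function.update_eq_self, hempty] at hβ
  rw [configOperator, hβ, ← letterAction_pattern hρ]
  simp only [stackWord, List.map_nil, List.nil_append, wordOperator_cons]
  rfl

lemma configOperator_eq_timeAction {c c' : M.Config} (h : M.step c = some c') :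
    configOperator ρ c = timeAction ρ (configOperator ρ c') := by
  obtain ⟨u, u', β, hrule, hc, hc'⟩ := M.complete h
  have htime : timeAction ρ (ρ (.pattern u')) = ρ (.pattern u) :=
    adjoint_apply_eq hρ (.rule u u' hrule)
  obtain ⟨g, hcomm, hgu, hgu'⟩ : ∃ g, Commute (timeAction ρ) g ∧
      configOperator ρ c = g (ρ (.pattern u)) ∧ configOperator ρ c' = g (ρ (.pattern u')) := by
    by_cases hbottom : ∃ k, u.2 = some (k, none)
    · obtain ⟨k, hk⟩ := hbottom
      obtain ⟨g, hcomm, hg⟩ := exists_configOperator_of_fill_bottom hρ β k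
      exact ⟨g, hcomm, hg u c hk hc, hg u' c' ((M.bottom_iff hrule k).1 hk) hc'⟩
    · push Not at hbottom
      refine ⟨_, commute_wordOperator fun l _ => commute_timeAction_letterAction hρ l,
        configOperator_of_fill hρ hbottom hc, configOperator_of_fill hρ (fun k hk => ?_) hc'⟩
      exact hbottom k ((M.bottom_iff hrule k).2 hk)
  rw [hgu, hgu', ← htime]
  exact (DFunLike.congr_fun hcomm.eq _).symm

lemma Halts.exists_configOperator_eq_pow {d : ℕ} {c : M.Config} (h : Halts d c) :
    ∃ x, configOperator ρ c = (timeAction ρ ^ d) x := by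
  induction d generalizing c with
  | zero => exact ⟨_, rfl⟩
  | succ d ih =>
    obtain ⟨c', hstep, hhalts⟩ := h
    obtain ⟨x, hx⟩ := ih hhalts
    refine ⟨x, ?_⟩
    rw [configOperator_eq_timeAction hρ hstep, hx, pow_succ']
    rfl

lemma wordOperator_take_eq_initial {i : ℕ} (hi : i ≤ w.length) :
    wordOperator (letterAction ρ) (w.take i) (ρ (.pattern (p₀, none))) =
      ρ (.initial p₀ i) := by
  induction i with
  | zero => rfl
  | succ i ih =>
    rw [List.take_succ_eq_append_getElem hi, wordOperator_append,
      ← adjoint_apply_eq hρ (.extend i hi), ← ih (by omega), wordOperator_singleton]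
    rfl

lemma Halts.lt_card_end {β : M.Stack → List M.Symbol} (hw : w = configWord β) [Finite V]
    [Nontrivial V] {T : ℕ} (hT : Halts T (p₀, β)) : T < Nat.card (AddMonoid.End V) := by
  subst hw
  have : Finite (AddMonoid.End V) :=
    Finite.of_injective (fun f : AddMonoid.End V => (f : V → V)) DFunLike.coe_injective
  have hstart : configOperator ρ (p₀, β) = ρ (.initial p₀ (configWord β).length) := by
    rw [← wordOperator_take_eq_initial hρ le_rfl, List.take_length]
    rfl
  obtain ⟨x, hx⟩ := hT.exists_configOperator_eq_pow hρ
  refine lt_card_of_pow_apply_ne_zero (f := timeAction ρ) (x := x) ?_ ?_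
  · intro hzero
    have hdetect := adjoint_apply_eq hρ .detect
    rw [← hstart, hx, hzero, map_zero] at hdetect
    obtain ⟨v, hv⟩ := exists_ne (0 : V)
    exact hv (DFunLike.congr_fun (hdetect.trans hρ.one) v).symm
  · have htime := (adjoint_apply_eq hρ .time_initial).trans hρ.zero
    rw [← hstart, hx] at htime
    rw [pow_succ']
    exact htime

end LowerBound

end StackMachine

/-! ### Creation and annihilation operators in characteristic two -/

/-- The exterior algebra over `ZMod 2` of the space with basis `Y`, as the space of functions on its
monomials. -/
abbrev Fock (Y : Type) : Type := Finset Y → ZMod 2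

namespace Fock

variable {Y : Type}

lemma add_self_eq_zero (f : Fock Y) : f + f = 0 :=
  funext fun _ => CharTwo.add_self_eq_zero _

lemma end_add_self_eq_zero (x : AddMonoid.End (Fock Y)) : x + x = 0 :=
  AddMonoidHom.ext fun f => add_self_eq_zero (x f)

lemma adjoint_eq_of_mul_eq_mul_add {x y z : AddMonoid.End (Fock Y)} (h : x * y = y * x + z) :
    adjoint x y = z := by
  rw [adjoint_apply, h, add_right_comm, end_add_self_eq_zero, zero_add]

/-- The creation operator of `y`. -/
def create (y : Y) : AddMonoid.End (Fock Y) where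
  toFun f s := if y ∈ s then f (s.erase y) else 0
  map_zero' := by ext s; simp
  map_add' f g := by ext s; by_cases h : y ∈ s <;> simp [h]

/-- The annihilation operator of `y`. -/
def annihilate (y : Y) : AddMonoid.End (Fock Y) where
  toFun f s := if y ∈ s then 0 else f (insert y s)
  map_zero' := by ext s; simp
  map_add' f g := by ext s; by_cases h : y ∈ s <;> simp [h]

lemma create_apply (y : Y) (f : Fock Y) (s : Finset Y) :
    create y f s = if y ∈ s then f (s.erase y) else 0 := rfl

lemma annihilate_apply (y : Y) (f : Fock Y) (s : Finset Y) :
    annihilate y f s = if y ∈ s then 0 else f (insert y s) := rfl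

lemma commute_create (y z : Y) : Commute (create y) (create z) := by
  rcases eq_or_ne y z with rfl | hyz
  · exact Commute.refl _
  · refine AddMonoidHom.ext fun f => funext fun s => ?_
    change create y (create z f) s = create z (create y f) s
    simp only [create_apply, Finset.mem_erase, Finset.erase_right_comm (a := y) (b := z)]
    by_cases hy : y ∈ s <;> by_cases hz : z ∈ s <;> simp [hy, hz, hyz, hyz.symm]

lemma commute_annihilate (y z : Y) : Commute (annihilate y) (annihilate z) := by
  rcases eq_or_ne y z with rfl | hyz
  · exact Commute.refl _
  · refine AddMonoidHom.ext fun f => funext fun s => ?_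
    change annihilate y (annihilate z f) s = annihilate z (annihilate y f) s
    simp only [annihilate_apply, Finset.mem_insert, Finset.insert_comm y z]
    by_cases hy : y ∈ s <;> by_cases hz : z ∈ s <;> simp [hy, hz, hyz, hyz.symm]

lemma annihilate_mul_create (y z : Y) :
    annihilate y * create z = create z * annihilate y + if y = z then 1 else 0 := by
  refine AddMonoidHom.ext fun f => funext fun s => ?_
  rcases eq_or_ne y z with rfl | hyz
  · rw [if_pos rfl]
    change annihilate y (create y f) s = create y (annihilate y f) s + f s
    by_cases hy : y ∈ s <;> simp [annihilate_apply, create_apply, hy, CharTwo.add_self_eq_zero]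
  · rw [if_neg hyz, add_zero]
    change annihilate y (create z f) s = create z (annihilate y f) s
    by_cases hy : y ∈ s <;> by_cases hz : z ∈ s <;>
      simp [annihilate_apply, create_apply, hy, hz, hyz, hyz.symm, Finset.erase_insert_of_ne]

/-- The annihilation operator of an element of `Y`, or zero. -/
def annihilateOption (o : Option Y) : AddMonoid.End (Fock Y) := o.elim 0 annihilate

lemma commute_annihilateOption (o o' : Option Y) :
    Commute (annihilateOption o) (annihilateOption o') := by
  rcases o with _ | y
  · exact Commute.zero_left _
  · rcases o' with _ | z
    · exact Commute.zero_right _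
    · exact commute_annihilate y z

lemma annihilateOption_mul_create (o : Option Y) (z : Y) : annihilateOption o * create z =
    create z * annihilateOption o + if o = some z then 1 else 0 := by
  cases o <;> simp [annihilateOption, annihilate_mul_create]

/-- The elements that a partial map sends into a given set. -/
def partialPreimage (φ : Y → Option Y) (S : Set Y) : Set Y := {y | ∃ z ∈ φ y, z ∈ S}

lemma mem_partialPreimage {φ : Y → Option Y} {S : Set Y} {y : Y} :
    y ∈ partialPreimage φ S ↔ ∃ z ∈ φ y, z ∈ S := Iff.rfl

variable [Fintype Y]

/-- The sum of the creation operators of the elements of a set. -/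
def createSum (S : Set Y) : AddMonoid.End (Fock Y) := ∑ y, if y ∈ S then create y else 0

/-- The second quantization of a partial map. -/
def transport (φ : Y → Option Y) : AddMonoid.End (Fock Y) :=
  ∑ y, create y * annihilateOption (φ y)

lemma createSum_empty : createSum (∅ : Set Y) = 0 := by
  simp [createSum]

lemma commute_createSum_create (S : Set Y) (y : Y) : Commute (createSum S) (create y) :=
  Commute.sum_left _ _ _ fun z _ => by
    split_ifs
    · exact commute_create z y
    · exact Commute.zero_left _

lemma annihilateOption_mul_createSum (o : Option Y) (S : Set Y) : annihilateOption o * createSum S =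
    createSum S * annihilateOption o + if ∃ z ∈ o, z ∈ S then 1 else 0 := by
  have hterm (y : Y) : annihilateOption o * (if y ∈ S then create y else 0) =
      (if y ∈ S then create y else 0) * annihilateOption o +
        if o = some y then if y ∈ S then 1 else 0 else 0 := by
    split_ifs <;> simp_all [annihilateOption_mul_create]
  simp only [createSum, Finset.mul_sum, Finset.sum_mul, hterm, Finset.sum_add_distrib]
  congr 1
  cases o <;> simp

lemma adjoint_annihilate_createSum {y : Y} {S : Set Y} (hy : y ∈ S) :
    adjoint (annihilate y) (createSum S) = 1 := by
  refine adjoint_eq_of_mul_eq_mul_add ?_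
  simpa [annihilateOption, hy] using annihilateOption_mul_createSum (some y) S

lemma adjoint_transport_createSum (φ : Y → Option Y) (S : Set Y) :
    adjoint (transport φ) (createSum S) = createSum (partialPreimage φ S) := by
  refine adjoint_eq_of_mul_eq_mul_add ?_
  have hterm (y : Y) : create y * annihilateOption (φ y) * createSum S =
      createSum S * (create y * annihilateOption (φ y)) +
        if y ∈ partialPreimage φ S then create y else 0 := by
    rw [mul_assoc, annihilateOption_mul_createSum, mul_add, ← mul_assoc,
      ← (commute_createSum_create S y).eq, mul_assoc, mul_ite, mul_one, mul_zero]
    simp only [mem_partialPreimage]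
  rw [transport, Finset.sum_mul, Finset.mul_sum, Finset.sum_congr rfl fun y _ => hterm y,
    Finset.sum_add_distrib]
  rfl

lemma transport_mul_create (φ : Y → Option Y) (z : Y) : transport φ * create z =
    create z * transport φ + ∑ y, if φ y = some z then create y else 0 := by
  rw [transport, Finset.mul_sum, Finset.sum_mul, ← Finset.sum_add_distrib]
  refine Finset.sum_congr rfl fun y _ => ?_
  rw [mul_assoc, annihilateOption_mul_create, mul_add, ← mul_assoc, (commute_create y z).eq,
    mul_assoc, mul_ite, mul_one, mul_zero]

lemma annihilateOption_mul_transport (o : Option Y) (φ : Y → Option Y) :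
    annihilateOption o * transport φ =
      transport φ * annihilateOption o + annihilateOption (o.bind φ) := by
  have hterm (y : Y) : annihilateOption o * (create y * annihilateOption (φ y)) =
      create y * annihilateOption (φ y) * annihilateOption o +
        if o = some y then annihilateOption (φ y) else 0 := by
    rw [← mul_assoc, annihilateOption_mul_create, add_mul, mul_assoc,
      (commute_annihilateOption o (φ y)).eq, ← mul_assoc, ite_mul, one_mul, zero_mul]
  simp only [transport, Finset.mul_sum, Finset.sum_mul, hterm, Finset.sum_add_distrib]
  congr 1
  cases o <;> simp [annihilateOption]

lemma sum_sum_create_mul_annihilateOption (φ ψ : Y → Option Y) :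
    ∑ y, (∑ x, if φ x = some y then create x else 0) * annihilateOption (ψ y) =
      transport fun x => (φ x).bind ψ := by
  simp only [transport, Finset.sum_mul]
  rw [Finset.sum_comm]
  refine Finset.sum_congr rfl fun x _ => ?_
  cases φ x <;> simp [annihilateOption]

lemma transport_mul_transport_add (φ ψ : Y → Option Y) :
    transport φ * transport ψ + transport (fun y => (ψ y).bind φ) =
      transport ψ * transport φ + transport (fun y => (φ y).bind ψ) := by
  have hterm (y : Y) : transport φ * (create y * annihilateOption (ψ y)) +
      create y * annihilateOption ((ψ y).bind φ) =
      create y * annihilateOption (ψ y) * transport φ +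
        (∑ x, if φ x = some y then create x else 0) * annihilateOption (ψ y) := by
    rw [← mul_assoc, transport_mul_create, add_mul, mul_assoc (create y) (annihilateOption (ψ y)),
      annihilateOption_mul_transport, mul_add, ← mul_assoc (create y) (transport φ)]
    abel
  calc transport φ * transport ψ + transport (fun y => (ψ y).bind φ)
      = ∑ y, (transport φ * (create y * annihilateOption (ψ y)) +
          create y * annihilateOption ((ψ y).bind φ)) := by
        rw [Finset.sum_add_distrib, ← Finset.mul_sum]
        rfl
    _ = _ := by
        rw [Finset.sum_congr rfl fun y _ => hterm y, Finset.sum_add_distrib, ← Finset.sum_mul,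
          sum_sum_create_mul_annihilateOption]
        rfl

lemma adjoint_transport_transport {φ ψ : Y → Option Y} (h : ∀ y, (ψ y).bind φ = (φ y).bind ψ) :
    adjoint (transport φ) (transport ψ) = 0 := by
  refine adjoint_eq_of_mul_eq_mul_add ?_
  have hmul := transport_mul_transport_add φ ψ
  rw [funext h] at hmul
  rw [add_right_cancel hmul, add_zero]

end Fock

namespace StackMachine

variable {M : StackMachine}

/-! ### Halting only depends on the top of the stacks -/

lemma Halts.unique {d e : ℕ} {c : M.Config} (hd : Halts d c) (he : Halts e c) : d = e := by
  induction d generalizing e c with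
  | zero =>
    cases e with
    | zero => rfl
    | succ e =>
      obtain ⟨c', hstep, -⟩ := he
      exact absurd (hstep.symm.trans hd) (Option.some_ne_none _)
  | succ d ih =>
    obtain ⟨c', hstep, hd⟩ := hd
    cases e with
    | zero => exact absurd (hstep.symm.trans he) (Option.some_ne_none _)
    | succ e =>
      obtain ⟨c'', hstep', he⟩ := he
      cases hstep.symm.trans hstep'
      rw [ih hd he]

/-- The stacks agree up to depth `n`. -/
def AgreeTo (n : ℕ) (β β' : M.Stack → List M.Symbol) : Prop :=
  ∀ k, (β k).take n = (β' k).take n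

namespace AgreeTo

variable {n : ℕ} {β β' : M.Stack → List M.Symbol}

lemma symm (h : AgreeTo n β β') : AgreeTo n β' β := fun k => (h k).symm

lemma mono {m : ℕ} (h : AgreeTo n β β') (hm : m ≤ n) : AgreeTo m β β' := fun k => by
  simpa [List.take_take, min_eq_left hm] using congrArg (List.take m) (h k)

lemma eq_nil (h : AgreeTo (n + 1) β β') {k : M.Stack} (hk : β k = []) : β' k = [] := by
  simpa [hk] using h k

lemma exists_eq_cons (h : AgreeTo (n + 1) β β') {k : M.Stack} {a : M.Symbol} {l : List M.Symbol}
    (hk : β k = a :: l) : ∃ l', β' k = a :: l' ∧ l.take n = l'.take n := by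
  have hk' := h k
  rw [hk] at hk'
  cases hl : β' k with
  | nil => simp [hl] at hk'
  | cons b l' =>
    obtain ⟨rfl, htake⟩ : a = b ∧ l.take n = l'.take n := by simpa [hl] using hk'
    exact ⟨l', rfl, htake⟩

lemma update (h : AgreeTo n β β') {k : M.Stack} {l l' : List M.Symbol}
    (hl : l.take n = l'.take n) :
    AgreeTo n (Function.update β k l) (Function.update β' k l') := by
  intro j
  rcases eq_or_ne j k with rfl | hj
  · simpa using hl
  · simpa [hj] using h j

lemma of_fill (h : AgreeTo n β β') {u : M.MPattern} {c c' : M.Config} (hc : u.fill β = some c)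
    (hc' : u.fill β' = some c') : c.1 = c'.1 ∧ AgreeTo n c.2 c'.2 := by
  obtain ⟨p, _ | ⟨k, _ | a⟩⟩ := u
  · cases hc
    cases hc'
    exact ⟨rfl, h⟩
  · simp only [Pattern.fill] at hc hc'
    split_ifs at hc hc'
    cases hc
    cases hc'
    exact ⟨rfl, h⟩
  · cases hc
    cases hc'
    refine ⟨rfl, h.update ?_⟩
    cases n with
    | zero => rfl
    | succ n => rw [List.take_succ_cons, List.take_succ_cons, h.mono n.le_succ k]

end AgreeTo

lemma exists_fill_eq_of_agreeTo {n : ℕ} {u : M.MPattern} {β : M.Stack → List M.Symbol}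
    {c c' : M.Config} (hc : u.fill β = some c) (hstate : c.1 = c'.1)
    (hagree : AgreeTo (n + 1) c.2 c'.2) : ∃ β', u.fill β' = some c' ∧ AgreeTo n β β' := by
  obtain ⟨p', δ⟩ := c'
  obtain ⟨p, _ | ⟨k, _ | a⟩⟩ := u
  · cases hc
    cases hstate
    exact ⟨δ, rfl, hagree.mono n.le_succ⟩
  · simp only [Pattern.fill] at hc
    split_ifs at hc with hempty
    cases hc
    cases hstate
    exact ⟨δ, if_pos (hagree.eq_nil hempty), hagree.mono n.le_succ⟩
  · cases hc
    cases hstate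
    obtain ⟨l, hδ, hl⟩ := hagree.exists_eq_cons (Function.update_self k (a :: β k) β)
    refine ⟨Function.update δ k l, by simp [Pattern.fill, ← hδ], ?_⟩
    simpa using (hagree.mono n.le_succ).update (k := k) hl

lemma fill_eq_none_iff_of_rule {u u' : M.MPattern} (h : M.Rule u u')
    (β : M.Stack → List M.Symbol) : u.fill β = none ↔ u'.fill β = none := by
  have hbottom := M.bottom_iff h
  obtain ⟨p, _ | ⟨k, _ | a⟩⟩ := u <;> obtain ⟨p', _ | ⟨k', _ | a'⟩⟩ := u' <;>
    simp_all [Pattern.fill]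

lemma exists_step_eq_of_agreeTo {n : ℕ} {c c' d : M.Config} (hstate : c.1 = d.1)
    (hagree : AgreeTo (n + 1) c.2 d.2) (hstep : M.step c = some c') :
    ∃ d', M.step d = some d' ∧ c'.1 = d'.1 ∧ AgreeTo n c'.2 d'.2 := by
  obtain ⟨u, u', β, hrule, hc, hc'⟩ := M.complete hstep
  obtain ⟨δ, hd, hδ⟩ := exists_fill_eq_of_agreeTo hc hstate hagree
  have hne : u'.fill δ ≠ none := by
    rw [Ne, ← fill_eq_none_iff_of_rule hrule, hd]
    exact Option.some_ne_none _
  obtain ⟨d', hd'⟩ := Option.ne_none_iff_exists'.1 hne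
  have hsound := M.sound hrule δ
  rw [hd, hd'] at hsound
  exact ⟨d', hsound, hδ.of_fill hc' hd'⟩

lemma Halts.of_agreeTo {d : ℕ} {c e : M.Config} (h : Halts d c) (hstate : c.1 = e.1)
    (hagree : AgreeTo (d + 1) c.2 e.2) : Halts d e := by
  induction d generalizing c e with
  | zero =>
    refine Option.eq_none_iff_forall_ne_some.2 fun e' he => ?_
    obtain ⟨c', hc, -⟩ := exists_step_eq_of_agreeTo hstate.symm hagree.symm he
    exact absurd (hc.symm.trans h) (Option.some_ne_none _)
  | succ d ih =>
    obtain ⟨c', hc, hc'⟩ := h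
    obtain ⟨e', he, hstate', hagree'⟩ := exists_step_eq_of_agreeTo hstate hagree hc
    exact ⟨e', he, ih hc' hstate' hagree'⟩

lemma halts_iff_of_agreeTo {d : ℕ} {p : M.State} {β β' : M.Stack → List M.Symbol}
    (hagree : AgreeTo (d + 1) β β') : Halts d (p, β) ↔ Halts d (p, β') :=
  ⟨fun h => h.of_agreeTo rfl hagree, fun h => h.of_agreeTo rfl hagree.symm⟩

/-! ### The realization on a Fock space -/

variable (M) in
/-- The basis of the space underlying the Fock space: a remaining time at most `T` together with
stacks truncated to the depth `T + 1`, which is as deep as `T` steps can see. -/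
abbrev Site (T : ℕ) : Type := Fin (T + 1) × (M.Stack → {l : List M.Symbol // l.length ≤ T + 1})

instance (T : ℕ) : Finite {l : List M.Symbol // l.length ≤ T + 1} :=
  List.finite_length_le M.Symbol (T + 1)

instance (T : ℕ) : Fintype (M.Site T) := .ofFinite _

/-- The truncation of a stack to the depth `T + 1`. -/
def truncate (T : ℕ) (l : List M.Symbol) : {l : List M.Symbol // l.length ≤ T + 1} :=
  ⟨l.take (T + 1), by simp⟩

lemma take_truncate {T n : ℕ} (hn : n < T + 1) (l : List M.Symbol) :
    (truncate T l).1.take (n + 1) = l.take (n + 1) := by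
  rw [truncate, List.take_take, min_eq_left hn]

namespace Site

variable {T : ℕ}

/-- The stacks of a site. -/
def contents (y : M.Site T) (k : M.Stack) : List M.Symbol := (y.2 k).1

/-- Lowers the remaining time by one. A site with remaining time zero has no image. -/
def tick (y : M.Site T) : Option (M.Site T) :=
  if (y.1 : ℕ) = 0 then none else some (⟨y.1 - 1, by omega⟩, y.2)

/-- Writes a letter. The bottom marker can only be written on an empty stack. -/
def write (y : M.Site T) : M.MLetter → Option (M.Site T)
  | (k, some a) => some (y.1, Function.update y.2 k (truncate T (a :: y.contents k)))
  | (k, none) => if y.contents k = [] then some y else none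

/-- Writes a word, from the last letter to the first one. -/
def writeWord (y : M.Site T) (w : List M.MLetter) : Option (M.Site T) :=
  w.foldr (fun l o => o.bind fun y => y.write l) (some y)

lemma contents_update (y : M.Site T) (k : M.Stack) (l : {l : List M.Symbol // l.length ≤ T + 1}) :
    contents ((y.1, Function.update y.2 k l) : M.Site T) = Function.update y.contents k l.1 := by
  funext j
  rcases eq_or_ne j k with rfl | hj
  · simp [contents]
  · simp [contents, hj]

lemma write_comm {l l' : M.MLetter} (h : l.1 ≠ l'.1) (y : M.Site T) :
    (y.write l').bind (write · l) = (y.write l).bind (write · l') := by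
  obtain ⟨k, o⟩ := l
  obtain ⟨k', o'⟩ := l'
  replace h : k ≠ k' := h
  have hcontents := contents_update y
  rcases o with _ | a <;> rcases o' with _ | a'
  · by_cases hk : y.contents k = [] <;> by_cases hk' : y.contents k' = [] <;> simp [write, hk, hk']
  · by_cases hk : y.contents k = [] <;> simp [write, hk, hcontents, h]
  · by_cases hk' : y.contents k' = [] <;> simp [write, hk', hcontents, h.symm]
  · simp [write, hcontents, h, h.symm, Function.update_comm h]

lemma tick_write_comm (l : M.MLetter) (y : M.Site T) :
    (y.write l).bind tick = y.tick.bind (write · l) := by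
  obtain ⟨k, o⟩ := l
  have hcontents (d : Fin (T + 1)) : contents ((d, y.2) : M.Site T) = y.contents := rfl
  rcases o with _ | a
  · by_cases hk : y.contents k = [] <;> by_cases hd : (y.1 : ℕ) = 0 <;>
      simp [write, tick, hk, hd, hcontents]
  · by_cases hd : (y.1 : ℕ) = 0 <;> simp [write, tick, hd, hcontents]

lemma writeWord_append (w w' : List M.MLetter) (y : M.Site T) :
    y.writeWord (w ++ w') = (y.writeWord w').bind (writeWord · w) := by
  induction w with
  | nil => exact (Option.bind_fun_some _).symm
  | cons l w ih =>
    change (y.writeWord (w ++ w')).bind _ = _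
    rw [ih, Option.bind_assoc]
    rfl

lemma writeWord_stackWord (k : M.Stack) (l : List M.Symbol) (y : M.Site T) :
    y.writeWord (stackWord k l) =
      if y.contents k = [] then some (y.1, Function.update y.2 k (truncate T l)) else none := by
  induction l with
  | nil =>
    change (if y.contents k = [] then some y else none) = _
    refine if_ctx_congr Iff.rfl (fun hk => ?_) fun _ => rfl
    have hnil : truncate T [] = y.2 k := Subtype.ext hk.symm
    rw [hnil, Function.update_eq_self]
  | cons a l ih =>
    change (y.writeWord (stackWord k l)).bind _ = _
    rw [ih]
    split_ifs with hk
    · have htruncate : truncate T (a :: (truncate T l).1) = truncate T (a :: l) := by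
        simp [truncate, List.take_take]
      simp only [Option.bind_some, write, contents_update, Function.update_self,
        Function.update_idem, htruncate]
    · rfl

lemma writeWord_stacksWord (β : M.Stack → List M.Symbol) {ks : List M.Stack} (hnodup : ks.Nodup)
    (y : M.Site T) : y.writeWord (stacksWord β ks) = if ∀ k ∈ ks, y.contents k = [] then
      some (y.1, fun k => if k ∈ ks then truncate T (β k) else y.2 k) else none := by
  induction ks with
  | nil => simp [stacksWord, writeWord]
  | cons j ks ih =>
    obtain ⟨hj, hnodup⟩ := List.nodup_cons.1 hnodup
    change y.writeWord (stackWord j (β j) ++ stacksWord β ks) = _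
    rw [writeWord_append, ih hnodup]
    by_cases hks : ∀ k ∈ ks, y.contents k = []
    · rw [if_pos hks, Option.bind_some, writeWord_stackWord]
      refine if_ctx_congr ?_ (fun _ => ?_) fun _ => rfl
      · rw [List.forall_mem_cons, and_iff_left hks]
        simp [contents, hj]
      · congr 2
        funext k
        rcases eq_or_ne k j with rfl | hk <;> simp [*]
    · rw [if_neg hks, if_neg fun h => hks fun k hk => h k (List.mem_cons_of_mem j hk)]
      rfl

/-- The sites at which putting in the pattern `u` gives a configuration that halts after exactly the
remaining time. -/
def haltingSet (u : M.MPattern) : Set (M.Site T) :=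
  {y | ∃ c, u.fill y.contents = some c ∧ Halts y.1 c}

lemma mem_haltingSet_none {p : M.State} {y : M.Site T} :
    y ∈ haltingSet (p, none) ↔ Halts y.1 (p, y.contents) := by
  simp [haltingSet, Pattern.fill]

lemma partialPreimage_write_haltingSet (p : M.State) (l : M.MLetter) :
    Fock.partialPreimage (write (T := T) · l) (haltingSet (p, none)) = haltingSet (p, some l) := by
  ext y
  rw [Fock.mem_partialPreimage]
  obtain ⟨k, _ | a⟩ := l
  · by_cases hk : y.contents k = [] <;> simp [write, haltingSet, Pattern.fill, hk]
  · have hagree : AgreeTo (y.1 + 1) (Function.update y.contents k (truncate T (a :: y.contents k)))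
        (Function.update y.contents k (a :: y.contents k)) :=
      AgreeTo.update (fun _ => rfl) (take_truncate y.1.isLt _)
    simpa [write, mem_haltingSet_none, contents_update, haltingSet, Pattern.fill] using
      halts_iff_of_agreeTo hagree

lemma partialPreimage_tick_haltingSet {u u' : M.MPattern} (h : M.Rule u u') :
    Fock.partialPreimage (tick (T := T)) (haltingSet u') = haltingSet u := by
  ext y
  rw [Fock.mem_partialPreimage]
  have hsound := M.sound h y.contents
  by_cases hd : (y.1 : ℕ) = 0
  · simp only [tick, if_pos hd, Option.mem_def, reduceCtorEq, false_and, exists_false, false_iff]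
    rintro ⟨c, hc, hhalts⟩
    rw [hd] at hhalts
    rw [hc, Option.bind_some, show M.step c = none from hhalts] at hsound
    rw [(fill_eq_none_iff_of_rule h _).2 hsound.symm] at hc
    cases hc
  · obtain ⟨d, hd'⟩ := Nat.exists_eq_succ_of_ne_zero hd
    have htick : y.tick = some (⟨y.1 - 1, by omega⟩, y.2) := if_neg hd
    have hpred : (y.1 : ℕ) - 1 = d := by omega
    simp only [htick, Option.mem_some_iff, exists_eq_left']
    change (∃ c', u'.fill y.contents = some c' ∧ Halts ((y.1 : ℕ) - 1) c') ↔
      ∃ c, u.fill y.contents = some c ∧ Halts (y.1 : ℕ) c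
    rw [hpred, hd']
    simp only [← hsound, Option.bind_eq_some_iff, Halts]
    grind

/-- The sites at which writing `w` gives a site that halts from the state `p₀` after exactly the
remaining time. -/
def initialSet (p₀ : M.State) (w : List M.MLetter) : Set (M.Site T) :=
  Fock.partialPreimage (writeWord · w) (haltingSet (p₀, none))

lemma initialSet_nil (p₀ : M.State) :
    initialSet p₀ [] = haltingSet (T := T) (p₀, none) := by
  ext y
  simp [initialSet, Fock.mem_partialPreimage, writeWord]

lemma partialPreimage_write_initialSet (p₀ : M.State) (w : List M.MLetter) (l : M.MLetter) :
    Fock.partialPreimage (write (T := T) · l) (initialSet p₀ w) = initialSet p₀ (w ++ [l]) := by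
  ext y
  simp only [initialSet, Fock.mem_partialPreimage, writeWord_append, Option.mem_def,
    Option.bind_eq_some_iff]
  have hsingle : y.writeWord [l] = y.write l := rfl
  rw [hsingle]
  grind

lemma mem_initialSet_configWord {p₀ : M.State} {β : M.Stack → List M.Symbol} {y : M.Site T} :
    y ∈ initialSet p₀ (configWord β) ↔ (∀ k, y.contents k = []) ∧ Halts y.1 (p₀, β) := by
  rw [initialSet, Fock.mem_partialPreimage, configWord,
    writeWord_stacksWord β (Finset.nodup_toList _)]
  simp only [Finset.mem_toList, Finset.mem_univ, true_implies, if_true]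
  by_cases hempty : ∀ k, y.contents k = []
  · simp only [hempty, implies_true, if_true, Option.mem_some_iff, exists_eq_left', true_and,
      mem_haltingSet_none]
    exact halts_iff_of_agreeTo fun k => take_truncate y.1.isLt _
  · simp [hempty]

lemma partialPreimage_tick_initialSet {p₀ : M.State} {β : M.Stack → List M.Symbol}
    (hT : Halts T (p₀, β)) :
    Fock.partialPreimage (tick (T := T)) (initialSet p₀ (configWord β)) = ∅ := by
  refine Set.eq_empty_of_forall_notMem fun y hy => ?_
  obtain ⟨z, hz, hmem⟩ := Fock.mem_partialPreimage.1 hy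
  have hT' := (mem_initialSet_configWord.1 hmem).2.unique hT
  simp only [tick, Option.mem_def, Option.ite_none_left_eq_some, Option.some.injEq] at hz
  obtain ⟨hd, rfl⟩ := hz
  have := y.1.is_le
  simp only at hT'
  omega

end Site

/-- The operators on the Fock space that realize the operator system of a machine that halts after
exactly `T` steps. -/
def fockOperator (p₀ : M.State) (T : ℕ) {w : List M.MLetter} :
    M.Operator w → AddMonoid.End (Fock (M.Site T))
  | .zero => 0
  | .one => 1
  | .time => Fock.transport Site.tick
  | .detector => Fock.annihilate (Fin.last T, fun _ => truncate T [])
  | .letter l => Fock.transport (Site.write · l)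
  | .pattern u => Fock.createSum (Site.haltingSet u)
  | .word i => Fock.createSum (Site.initialSet p₀ (w.take (i + 1)))

lemma fockOperator_initial (p₀ : M.State) (T : ℕ) {w : List M.MLetter} {i : ℕ}
    (hi : i ≤ w.length) : fockOperator p₀ T (.initial p₀ i : M.Operator w) =
      Fock.createSum (Site.initialSet p₀ (w.take i)) := by
  cases i with
  | zero => rw [List.take_zero, Site.initialSet_nil]; rfl
  | succ i =>
    change Fock.createSum (Site.initialSet p₀ (w.take (i % (w.length + 1) + 1))) = _
    rw [Nat.mod_eq_of_lt (by omega)]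

theorem isRealization_fockOperator {p₀ : M.State} {β : M.Stack → List M.Symbol} {T : ℕ}
    (hT : Halts T (p₀, β)) :
    (M.toOperatorSystem p₀ (configWord β)).IsRealization (fockOperator p₀ T) where
  add_self := Fock.add_self_eq_zero
  zero := rfl
  one := rfl
  bracket i j k h := by
    change adjoint (fockOperator p₀ T i) (fockOperator p₀ T j) = fockOperator p₀ T k
    have hlast := fockOperator_initial p₀ T (w := configWord β) le_rfl
    rw [List.take_length] at hlast
    cases h with
    | write p l =>
      exact (Fock.adjoint_transport_createSum _ _).trans
        (congrArg _ (Site.partialPreimage_write_haltingSet p l))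
    | letter_comm l l' h => exact Fock.adjoint_transport_transport (Site.write_comm h)
    | time_comm l => exact Fock.adjoint_transport_transport (Site.tick_write_comm l)
    | rule u u' h =>
      exact (Fock.adjoint_transport_createSum _ _).trans
        (congrArg _ (Site.partialPreimage_tick_haltingSet h))
    | extend i h =>
      rw [fockOperator_initial p₀ T h.le, fockOperator_initial p₀ T h,
        List.take_succ_eq_append_getElem h, ← Site.partialPreimage_write_initialSet]
      exact Fock.adjoint_transport_createSum _ _
    | time_initial =>
      rw [hlast]
      refine (Fock.adjoint_transport_createSum _ _).trans ?_
      rw [Site.partialPreimage_tick_initialSet hT, Fock.createSum_empty]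
      rfl
    | detect =>
      rw [hlast]
      exact Fock.adjoint_annihilate_createSum
        (Site.mem_initialSet_configWord.2 ⟨fun _ => rfl, hT⟩)

theorem Halts.exists_network {p₀ : M.State} {β : M.Stack → List M.Symbol} {T : ℕ}
    (hT : Halts T (p₀, β)) : ∃ net : Network, NetworkValid net ∧
      NetworkSizeLE net ((2000 * (Fintype.card M.MLetter + Fintype.card M.MPattern +
        (configWord β).length + 6)) ^ 6) ∧
      Solvable net ∧ ∀ q, 2 ≤ q → SolvableWith net q → T < q ^ q := by
  obtain ⟨net, hvalid, hsize, hreal, hsolv⟩ :=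
    (M.toOperatorSystem p₀ (configWord β)).exists_network
  refine ⟨net, hvalid, networkSizeLE_mono hsize ?_,
    ⟨_, Fintype.one_lt_card, hsolv _ _ (isRealization_fockOperator hT)⟩, fun q hq h => ?_⟩
  · exact Nat.pow_le_pow_left (Nat.mul_le_mul_left _ (Nat.succ_le_succ (Operator.card_le _))) 6
  · obtain ⟨_, ρ, hρ⟩ := hreal q (by omega) h
    have : Nontrivial (Fin q) := Fin.nontrivial_iff_two_le.2 hq
    exact (hT.lt_card_end hρ rfl).trans_le card_addMonoidEnd_fin_le

end StackMachine

/-! ### From programs for stacks to stack machines -/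

namespace StackProgram

open Turing Turing.TM2

section Elementary

variable {K Γ Λ σ : Type}

/-- The states of the machine that executes one instruction of a `Turing.TM2` program at a time: the
remaining statement, which is `none` after halting, and the value of the internal variable. -/
abbrev State (K Γ Λ σ : Type) : Type := Option (Stmt (fun _ : K => Γ) Λ σ) × σ

variable (M : Λ → Stmt (fun _ : K => Γ) Λ σ)

/-- Executes one instruction. -/
def step : State K Γ Λ σ × (K → List Γ) → Option (State K Γ Λ σ × (K → List Γ))
  | ((none, _), _) => none
  | ((some (.push k f q), v), β) => some ((some q, v), Function.update β k (f v :: β k))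
  | ((some (.peek k f q), v), β) => some ((some q, f v (β k).head?), β)
  | ((some (.pop k f q), v), β) => some ((some q, f v (β k).head?), Function.update β k (β k).tail)
  | ((some (.load f q), v), β) => some ((some q, f v), β)
  | ((some (.branch f q₁ q₂), v), β) => some ((some (cond (f v) q₁ q₂), v), β)
  | ((some (.goto f), v), β) => some ((some (M (f v)), v), β)
  | ((some .halt, v), β) => some ((none, v), β)

/-- The instructions as rules for patterns. Peeking and popping look at a letter, which is the
bottom marker if the stack is empty. -/
inductive Rule : Pattern (State K Γ Λ σ) K Γ → Pattern (State K Γ Λ σ) K Γ → Prop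
  | push (k : K) (f : σ → Γ) (q) (v : σ) :
      Rule ((some (.push k f q), v), none) ((some q, v), some (k, some (f v)))
  | peek (k : K) (f : σ → Option Γ → σ) (q) (v : σ) (o : Option Γ) :
      Rule ((some (.peek k f q), v), some (k, o)) ((some q, f v o), some (k, o))
  | pop (k : K) (f : σ → Option Γ → σ) (q) (v : σ) (a : Γ) :
      Rule ((some (.pop k f q), v), some (k, some a)) ((some q, f v (some a)), none)
  | pop_bottom (k : K) (f : σ → Option Γ → σ) (q) (v : σ) :
      Rule ((some (.pop k f q), v), some (k, none)) ((some q, f v none), some (k, none))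
  | load (f : σ → σ) (q) (v : σ) : Rule ((some (.load f q), v), none) ((some q, f v), none)
  | branch (f : σ → Bool) (q₁ q₂) (v : σ) :
      Rule ((some (.branch f q₁ q₂), v), none) ((some (cond (f v) q₁ q₂), v), none)
  | goto (f : σ → Λ) (v : σ) : Rule ((some (.goto f), v), none) ((some (M (f v)), v), none)
  | halt (v : σ) : Rule ((some .halt, v), none) ((none, v), none)

variable {M}

lemma Rule.bottom_iff {u u' : Pattern (State K Γ Λ σ) K Γ} (h : Rule M u u') (k : K) :
    u.2 = some (k, none) ↔ u'.2 = some (k, none) := by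
  cases h <;> simp

lemma Rule.sound {u u' : Pattern (State K Γ Λ σ) K Γ} (h : Rule M u u') (β : K → List Γ) :
    (u.fill β).bind (step M) = u'.fill β := by
  cases h with
  | peek k f q v o =>
    cases o with
    | none => by_cases hβ : β k = [] <;> simp [Pattern.fill, step, hβ]
    | some a => simp [Pattern.fill, step]
  | pop_bottom k f q v =>
    by_cases hβ : β k = []
    · have hupdate : Function.update β k [] = β := by rw [← hβ, Function.update_eq_self]
      simp [Pattern.fill, step, hβ, hupdate]
    · simp [Pattern.fill, hβ]
  | _ => simp [Pattern.fill, step]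

lemma exists_rule_peek (k : K) (f : σ → Option Γ → σ) (q : Stmt (fun _ : K => Γ) Λ σ) (v : σ)
    (β : K → List Γ) : ∃ u u' γ, Rule M u u' ∧
      Pattern.fill γ u = some ((some (.peek k f q), v), β) ∧
      Pattern.fill γ u' = some ((some q, f v (β k).head?), β) := by
  cases hβ : β k with
  | nil => exact ⟨_, _, β, .peek k f q v none, by simp [Pattern.fill, hβ],
      by simp [Pattern.fill, hβ]⟩
  | cons a l =>
    have hupdate : Function.update β k (a :: l) = β := by rw [← hβ, Function.update_eq_self]
    exact ⟨_, _, Function.update β k l, .peek k f q v (some a),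
      by simp [Pattern.fill, hupdate], by simp [Pattern.fill, hupdate]⟩

lemma exists_rule_pop (k : K) (f : σ → Option Γ → σ) (q : Stmt (fun _ : K => Γ) Λ σ) (v : σ)
    (β : K → List Γ) : ∃ u u' γ, Rule M u u' ∧
      Pattern.fill γ u = some ((some (.pop k f q), v), β) ∧
      Pattern.fill γ u' = some ((some q, f v (β k).head?), Function.update β k (β k).tail) := by
  cases hβ : β k with
  | nil =>
    have hupdate : Function.update β k [] = β := by rw [← hβ, Function.update_eq_self]
    exact ⟨_, _, β, .pop_bottom k f q v, by simp [Pattern.fill, hβ],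
      by simp [Pattern.fill, hβ, hupdate]⟩
  | cons a l => exact ⟨_, _, Function.update β k l, .pop k f q v a,
      by simp [Pattern.fill, ← hβ], by simp [Pattern.fill]⟩

lemma exists_rule_of_step {c c' : State K Γ Λ σ × (K → List Γ)} (h : step M c = some c') :
    ∃ u u' β, Rule M u u' ∧ Pattern.fill β u = some c ∧ Pattern.fill β u' = some c' := by
  obtain ⟨⟨_ | q, v⟩, β⟩ := c
  · cases h
  cases q with cases h
  | push k f q => exact ⟨_, _, β, .push k f q v, rfl, rfl⟩
  | peek k f q => exact exists_rule_peek k f q v β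
  | pop k f q => exact exists_rule_pop k f q v β
  | load f q => exact ⟨_, _, β, .load f q v, rfl, rfl⟩
  | branch f q₁ q₂ => exact ⟨_, _, β, .branch f q₁ q₂ v, rfl, rfl⟩
  | goto f => exact ⟨_, _, β, .goto f v, rfl, rfl⟩
  | halt => exact ⟨_, _, β, .halt v, rfl, rfl⟩

lemma length_le_of_step {c c' : State K Γ Λ σ × (K → List Γ)} (h : step M c = some c') (k : K) :
    (c'.2 k).length ≤ (c.2 k).length + 1 := by
  obtain ⟨⟨_ | q, v⟩, β⟩ := c
  · cases h
  cases q with cases h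
  | push j f q => by_cases hj : k = j <;> grind
  | pop j f q => by_cases hj : k = j <;> grind
  | _ => exact Nat.le_succ _

/-- The configuration of the elementary machine at the beginning of the statement of a label. -/
def encode (M : Λ → Stmt (fun _ : K => Γ) Λ σ) (c : Cfg (fun _ : K => Γ) Λ σ) :
    State K Γ Λ σ × (K → List Γ) :=
  ((c.l.map M, c.var), c.stk)

lemma reaches_encode_stepAux (q : Stmt (fun _ : K => Γ) Λ σ) (v : σ) (β : K → List Γ) :
    StateTransition.Reaches (step M) ((some q, v), β) (encode M (stepAux q v β)) := by
  induction q generalizing v β with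
  | push k f q ih => exact .head rfl (ih _ _)
  | peek k f q ih => exact .head rfl (ih _ _)
  | pop k f q ih => exact .head rfl (ih _ _)
  | load f q ih => exact .head rfl (ih _ _)
  | branch f q₁ q₂ ih₁ ih₂ =>
    refine .head rfl ?_
    rw [stepAux]
    cases f v with
    | true => exact ih₁ v β
    | false => exact ih₂ v β
  | goto f => exact .single rfl
  | halt => exact .single rfl

lemma reaches_encode {c c' : Cfg (fun _ : K => Γ) Λ σ}
    (h : StateTransition.Reaches (TM2.step M) c c') :
    StateTransition.Reaches (step M) (encode M c) (encode M c') := by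
  induction h with
  | refl => exact .refl
  | @tail c d _ h ih =>
    obtain ⟨_ | l, v, β⟩ := c
    · cases h
    · cases h
      exact ih.trans (reaches_encode_stepAux (M l) v β)

lemma step_encode_eq_none {c : Cfg (fun _ : K => Γ) Λ σ} (h : TM2.step M c = none) :
    step M (encode M c) = none := by
  obtain ⟨_ | l, v, β⟩ := c
  · rfl
  · cases h

end Elementary

/-- Forgets that the first component lies in `F`. -/
abbrev forget {P X : Type} {F : Set P} (c : F × X) : P × X := (c.1, c.2)

lemma forget_injective {P X : Type} {F : Set P} : Function.Injective (forget (X := X) (F := F)) :=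
  Subtype.val_injective.prodMap Function.injective_id

lemma map_forget_fill {K Γ P : Type} {F : Set P} (u : Pattern F K Γ) (β : K → List Γ) :
    (u.fill β).map forget = Pattern.fill β (forget u) := by
  obtain ⟨p, _ | ⟨k, _ | a⟩⟩ := u
  · rfl
  · by_cases h : β k = [] <;> simp [Pattern.fill, h]
  · rfl

lemma fst_eq_of_fill_eq_some {K Γ P : Type} {u : Pattern P K Γ} {β : K → List Γ}
    {c : P × (K → List Γ)} (h : u.fill β = some c) : c.1 = u.1 := by
  obtain ⟨p, _ | ⟨k, _ | a⟩⟩ := u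
  · cases h
    rfl
  · grind [Pattern.fill]
  · cases h
    rfl

section Restriction

variable {K Γ Λ σ : Type} (M : Λ → Stmt (fun _ : K => Γ) Λ σ) (F : Set (State K Γ Λ σ))

/-- The machine restricted to a set of states. It stops upon leaving the set. -/
def restrictedStep (c : F × (K → List Γ)) : Option (F × (K → List Γ)) :=
  (step M (forget c)).bind fun c' => if h : c'.1 ∈ F then some (⟨c'.1, h⟩, c'.2) else none

variable {M F}

lemma restrictedStep_eq_some_iff {c c' : F × (K → List Γ)} :
    restrictedStep M F c = some c' ↔ step M (forget c) = some (forget c') := by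
  simp only [restrictedStep, Option.bind_eq_some_iff]
  constructor
  · rintro ⟨d, hd, h⟩
    split_ifs at h
    cases h
    exact hd
  · exact fun h => ⟨_, h, by simp⟩

lemma restrictedStep_sound {u u' : Pattern F K Γ} (h : Rule M (forget u) (forget u'))
    (β : K → List Γ) : (u.fill β).bind (restrictedStep M F) = u'.fill β := by
  have hsound := h.sound β
  rw [← map_forget_fill, ← map_forget_fill, Option.bind_map] at hsound
  ext c
  have hc : u'.fill β = some c ↔ (u'.fill β).map forget = some (forget c) := by
    rw [← Option.map_some, (Option.map_injective forget_injective).eq_iff]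
  rw [hc, ← hsound]
  simp only [Option.bind_eq_some_iff, restrictedStep_eq_some_iff, Function.comp_apply]

lemma exists_rule_of_restrictedStep {c c' : F × (K → List Γ)}
    (h : restrictedStep M F c = some c') : ∃ (u u' : Pattern F K Γ) (β : K → List Γ),
      Rule M (forget u) (forget u') ∧ u.fill β = some c ∧ u'.fill β = some c' := by
  obtain ⟨⟨p, o⟩, ⟨p', o'⟩, β, hrule, hfill, hfill'⟩ :=
    exists_rule_of_step (restrictedStep_eq_some_iff.1 h)
  obtain rfl : (forget c).1 = p := fst_eq_of_fill_eq_some hfill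
  obtain rfl : (forget c').1 = p' := fst_eq_of_fill_eq_some hfill'
  have hinj := Option.map_injective (forget_injective (X := K → List Γ) (F := F))
  exact ⟨(c.1, o), (c'.1, o'), β, hrule, hinj ((map_forget_fill _ β).trans hfill),
    hinj ((map_forget_fill _ β).trans hfill')⟩

end Restriction

section Supported

variable {K Γ Λ σ : Type} (M : Λ → Stmt (fun _ : K => Γ) Λ σ) (S : Finset Λ)

/-- The states that occur while executing the statements of the labels in `S`. -/
def supportedStates : Set (State K Γ Λ σ) := {p | p.1 ∈ stmts M S}

lemma finite_supportedStates [Finite σ] : (supportedStates M S).Finite :=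
  ((stmts M S).finite_toSet.prod Set.finite_univ).subset fun _ hp => ⟨hp, trivial⟩

instance [Finite σ] : Fintype (supportedStates M S) := (finite_supportedStates M S).fintype

variable {M S}

lemma some_mem_supportedStates_of_mem {l : Λ} (hl : l ∈ S) (v : σ) :
    (some (M l), v) ∈ supportedStates M S :=
  Finset.some_mem_insertNone.2 (Finset.mem_biUnion.2 ⟨l, hl, stmts₁_self⟩)

lemma supportsStmt_of_mem_stmts (hS : ∀ l ∈ S, SupportsStmt S (M l))
    {q : Stmt (fun _ : K => Γ) Λ σ} (hq : some q ∈ stmts M S) : SupportsStmt S q := by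
  obtain ⟨l, hl, hmem⟩ := Finset.mem_biUnion.1 (Finset.some_mem_insertNone.1 hq)
  exact stmts₁_supportsStmt_mono hmem (hS l hl)

lemma mem_supportedStates_of_step (hS : ∀ l ∈ S, SupportsStmt S (M l))
    {c c' : State K Γ Λ σ × (K → List Γ)} (h : step M c = some c')
    (hc : c.1 ∈ supportedStates M S) : c'.1 ∈ supportedStates M S := by
  obtain ⟨⟨_ | q, v⟩, β⟩ := c
  · cases h
  replace hc : some q ∈ stmts M S := hc
  cases q with cases h
  | branch f q₁ q₂ =>
    refine stmts_trans (q₁ := cond (f v) q₁ q₂) ?_ hc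
    cases f v <;> simp [stmts₁, stmts₁_self]
  | goto f => exact some_mem_supportedStates_of_mem (supportsStmt_of_mem_stmts hS hc v) v
  | halt => exact Finset.none_mem_insertNone
  | _ => exact stmts_trans (by simp [stmts₁, stmts₁_self]) hc

end Supported

section Networks

variable {K Γ Λ σ : Type} [Fintype K] [Fintype Γ] [Finite σ]
  (M : Λ → Stmt (fun _ : K => Γ) Λ σ) (S : Finset Λ)

/-- The stack machine executing the statements of the labels in `S`. -/
abbrev toStackMachine : StackMachine where
  State := supportedStates M S
  Stack := K
  Symbol := Γ
  step := restrictedStep M (supportedStates M S)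
  Rule u u' := Rule M (forget u) (forget u')
  bottom_iff h := h.bottom_iff
  sound := restrictedStep_sound
  complete := exists_rule_of_restrictedStep

variable {M S}

lemma exists_halts_of_reaches (hS : ∀ l ∈ S, SupportsStmt S (M l))
    {c c' : State K Γ Λ σ × (K → List Γ)} (h : StateTransition.Reaches (step M) c c')
    (hc' : step M c' = none) (hc : c.1 ∈ supportedStates M S) :
    ∃ T, StackMachine.Halts (M := toStackMachine M S) T (⟨c.1, hc⟩, c.2) ∧
      ∀ k, (c'.2 k).length ≤ (c.2 k).length + T := by
  induction h using Relation.ReflTransGen.head_induction_on with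
  | refl => exact ⟨0, by simp [StackMachine.Halts, restrictedStep, hc'], fun k => le_rfl⟩
  | @head c d hstep _ ih =>
    obtain ⟨T, hT, hlength⟩ := ih (mem_supportedStates_of_step hS hstep hc)
    refine ⟨T + 1, ⟨_, restrictedStep_eq_some_iff.2 hstep, hT⟩, fun k => ?_⟩
    have := length_le_of_step hstep k
    have := hlength k
    omega

lemma length_configWord_le {N : StackMachine} {β : N.Stack → List N.Symbol} {m : ℕ}
    (hβ : ∀ k, (β k).length ≤ m) :
    (StackMachine.configWord β).length ≤ Fintype.card N.Stack * (m + 1) := by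
  rw [StackMachine.configWord, StackMachine.stacksWord, List.length_flatMap]
  refine (List.sum_le_card_nsmul _ (m + 1) fun x hx => ?_).trans (by simp)
  obtain ⟨k, -, rfl⟩ := List.mem_map.1 hx
  simpa [StackMachine.stackWord] using hβ k

end Networks

/-- The output cannot be longer than the input plus the running time, so a long output forces a
large alphabet. -/
theorem exists_networks {K Γ Λ σ : Type} [Finite K] [Finite Γ] [Finite σ]
    {M : Λ → Stmt (fun _ : K => Γ) Λ σ} {S : Finset Λ} (hS : ∀ l ∈ S, SupportsStmt S (M l)) :
    ∃ A : ℕ, ∀ l ∈ S, ∀ (v : σ) (β : K → List Γ) (m : ℕ), (∀ k, (β k).length ≤ m) →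
      ∀ c ∈ StateTransition.eval (TM2.step M) ⟨some l, v, β⟩,
        ∃ net : Network, NetworkValid net ∧ NetworkSizeLE net ((A * (m + 1)) ^ 6) ∧
          Solvable net ∧
          ∀ q, 2 ≤ q → SolvableWith net q → ∀ k, (c.stk k).length ≤ m + q ^ q := by
  have := Fintype.ofFinite K
  have := Fintype.ofFinite Γ
  let N := toStackMachine M S
  refine ⟨2000 * (Fintype.card N.MLetter + Fintype.card N.MPattern + Fintype.card K + 6),
    fun l hl v β m hβ c hc => ?_⟩
  obtain ⟨hreaches, hhalted⟩ := StateTransition.mem_eval.1 hc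
  obtain ⟨T, hT, hlength⟩ := exists_halts_of_reaches hS (reaches_encode hreaches)
    (step_encode_eq_none hhalted) (some_mem_supportedStates_of_mem hl v)
  obtain ⟨net, hvalid, hsize, hsolv, hlower⟩ := hT.exists_network
  refine ⟨net, hvalid, networkSizeLE_mono hsize (Nat.pow_le_pow_left ?_ 6), hsolv,
    fun q hq h k => ?_⟩
  · rw [mul_assoc]
    refine Nat.mul_le_mul_left _ ?_
    have hword : (StackMachine.configWord (M := N) β).length ≤ Fintype.card K * (m + 1) :=
      length_configWord_le hβ
    have hmul (a b : ℕ) : a + b * (m + 1) + 6 ≤ (a + b + 6) * (m + 1) := by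
      nlinarith [Nat.zero_le (a * m)]
    exact (Nat.add_le_add_right (Nat.add_le_add_left hword _) 6).trans (hmul _ _)
  · calc (c.stk k).length ≤ (β k).length + T := hlength k
      _ ≤ m + q ^ q := Nat.add_le_add (hβ k) (hlower q hq h).le

end StackProgram

/-! ### Computable functions -/

section ComputableFunctions

open Turing Turing.ToPartrec Turing.PartrecToTM2

instance : Finite K' :=
  .of_surjective ![K'.main, K'.rev, K'.aux, K'.stack] fun k => by
    cases k
    exacts [⟨0, rfl⟩, ⟨1, rfl⟩, ⟨2, rfl⟩, ⟨3, rfl⟩]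

lemma length_trPosNum_le (n : PosNum) : (trPosNum n).length ≤ n := by
  induction n with
  | one => simp [trPosNum]
  | bit0 n ih =>
    have := PosNum.to_nat_pos n
    simp only [trPosNum, List.length_cons, PosNum.cast_bit0]
    omega
  | bit1 n ih =>
    simp only [trPosNum, List.length_cons, PosNum.cast_bit1]
    omega

lemma lt_two_pow_length_trPosNum (n : PosNum) : (n : ℕ) < 2 ^ (trPosNum n).length := by
  induction n with
  | one => simp [trPosNum]
  | bit0 n ih =>
    simp only [trPosNum, List.length_cons, PosNum.cast_bit0, pow_succ]
    omega
  | bit1 n ih =>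
    simp only [trPosNum, List.length_cons, PosNum.cast_bit1, pow_succ]
    omega

lemma length_trNat_le (n : ℕ) : (trNat n).length ≤ n := by
  conv_rhs => rw [← Num.to_of_nat n]
  rw [trNat]
  cases (n : Num) with
  | zero => rfl
  | pos p => exact length_trPosNum_le p

lemma lt_two_pow_length_trNat (n : ℕ) : n < 2 ^ (trNat n).length := by
  conv_lhs => rw [← Num.to_of_nat n]
  rw [trNat]
  cases (n : Num) with
  | zero => exact one_pos
  | pos p => exact lt_two_pow_length_trPosNum p

lemma exists_code_of_computable {F : ℕ → ℕ} (hF : Computable F) :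
    ∃ c : Code, ∀ m, PartrecToTM2.halt [F m] ∈
      StateTransition.eval (TM2.step tr) (PartrecToTM2.init c [m]) := by
  have hpartrec : Nat.Partrec' (n := 1) (fun v => (F v.head : Part ℕ)) :=
    (Nat.Partrec'.part_iff₁ (f := fun n => (F n : Part ℕ))).2 hF
  obtain ⟨c, hc⟩ := Code.exists_code hpartrec
  refine ⟨c, fun m => ?_⟩
  have hm : c.eval [m] = pure <$> (F m : Part ℕ) := hc ⟨[m], rfl⟩
  rw [tr_eval, hm]
  exact ⟨trivial, rfl⟩

theorem exists_networks_of_computable {F : ℕ → ℕ} (hF : Computable F) :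
    ∃ A : ℕ, ∀ m, ∃ net : Network, NetworkValid net ∧ NetworkSizeLE net ((A * (m + 2)) ^ 6) ∧
      Solvable net ∧ ∀ q, 2 ≤ q → SolvableWith net q → F m < 2 ^ (m + q ^ q) := by
  obtain ⟨c, hc⟩ := exists_code_of_computable hF
  obtain ⟨hinit, hsupp⟩ := tr_supports c Cont'.halt
  obtain ⟨A, hA⟩ := StackProgram.exists_networks hsupp
  refine ⟨A, fun m => ?_⟩
  have hlength (k : K') : (K'.elim (trList [m]) [] [] [] k).length ≤ m + 1 := by
    cases k <;> simp [K'.elim, trList, length_trNat_le]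
  have heval := hc m
  rw [show instDecidableEqK' = fun a b => Classical.propDecidable (a = b) from
    Subsingleton.elim _ _] at heval
  obtain ⟨net, hvalid, hsize, hsolv, hlower⟩ := hA _ hinit none _ _ hlength _ heval
  refine ⟨net, hvalid, hsize, hsolv, fun q hq h => ?_⟩
  have houtput : (trNat (F m)).length + 1 ≤ m + 1 + q ^ q := by
    simpa [PartrecToTM2.halt, K'.elim, trList] using hlower q hq h K'.main
  calc F m < 2 ^ (trNat (F m)).length := lt_two_pow_length_trNat _
    _ ≤ 2 ^ (m + q ^ q) := Nat.pow_le_pow_right two_pos (by omega)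

lemma computable₂_pow : Computable₂ ((· ^ ·) : ℕ → ℕ → ℕ) :=
  (Primrec₂.unpaired'.1 Nat.Primrec.pow).to_comp

/-- If `q ≤ h m` then `q ^ q ≤ h m ^ h m`, so the networks for `2 ^ (m + h m ^ h m)` need an
alphabet of more than `h m` letters. -/
theorem exists_forall_lt_qMax {h : ℕ → ℕ} (hh : Computable h) :
    ∃ A, ∀ m ≥ A, h m < qMax ((m + 2) ^ 12) := by
  have hF : Computable fun m => 2 ^ (m + h m ^ h m) :=
    computable₂_pow.comp (.const 2)
      (Primrec.nat_add.to_comp.comp .id (computable₂_pow.comp hh hh))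
  obtain ⟨A, hA⟩ := exists_networks_of_computable hF
  refine ⟨A, fun m hm => ?_⟩
  obtain ⟨net, hvalid, hsize, hsolv, hlower⟩ := hA m
  have hbound : (A * (m + 2)) ^ 6 ≤ (m + 2) ^ 12 :=
    calc (A * (m + 2)) ^ 6 ≤ ((m + 2) * (m + 2)) ^ 6 := by gcongr; omega
      _ = (m + 2) ^ 12 := by ring
  refine lt_of_lt_of_le ?_ (minAlphabet_le_qMax hvalid (networkSizeLE_mono hsize hbound) hsolv)
  obtain ⟨htwo, hmin⟩ := hsolv.solvableWith_minAlphabet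
  by_contra! hle
  have hpow : minAlphabet net ^ minAlphabet net ≤ h m ^ h m :=
    (Nat.pow_le_pow_left hle _).trans (Nat.pow_le_pow_right (by omega) hle)
  exact (hlower _ htwo hmin).not_ge (Nat.pow_le_pow_right two_pos (by omega))

end ComputableFunctions

lemma exists_forall_le_mul_of_isBigO {u f : ℕ → ℕ}
    (h : (fun m => (u m : ℝ)) =O[Filter.atTop] (fun m => (f m : ℝ))) :
    ∃ C N : ℕ, ∀ m ≥ N, u m ≤ C * f m := by
  obtain ⟨C, hC⟩ := h.bound
  obtain ⟨N, hN⟩ := Filter.eventually_atTop.1 hC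
  refine ⟨⌈C⌉₊, N, fun m hm => ?_⟩
  have hreal : (u m : ℝ) ≤ ⌈C⌉₊ * f m :=
    calc (u m : ℝ) ≤ C * f m := by simpa using hN m hm
      _ ≤ ⌈C⌉₊ * f m := by gcongr; exact Nat.le_ceil C
  exact_mod_cast hreal

/-- Corollary `computable`: there is no computable function
`f : ℤ≥1 → ℤ≥2` with `qMax(m) = O(f(m))` as `m → ∞`; i.e., the minimum alphabet size
needed to solve a network is not upper-bounded by any computable function. -/
theorem qMax_not_bounded_by_computable :
    ¬ ∃ f : ℕ → ℕ, Computable f ∧ (∀ m, 2 ≤ f m) ∧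
      (fun m => (qMax m : ℝ)) =O[Filter.atTop] (fun m => (f m : ℝ)) := by
  rintro ⟨f, hf, -, hO⟩
  obtain ⟨C, N, hupper⟩ := exists_forall_le_mul_of_isBigO hO
  have hcomp : Computable fun m => C * f ((m + 2) ^ 12) :=
    Primrec.nat_mul.to_comp.comp (.const C) (hf.comp
      (computable₂_pow.comp (Primrec.nat_add.to_comp.comp .id (.const 2)) (.const 12)))
  obtain ⟨A, hlower⟩ := exists_forall_lt_qMax hcomp
  have hN : N ≤ (A + N + 2) ^ 12 :=
    calc N ≤ A + N + 2 := by omega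
      _ ≤ (A + N + 2) ^ 12 := Nat.le_self_pow (by norm_num) _
  exact (hlower (A + N) (Nat.le_add_right A N)).not_ge (hupper _ hN)

end
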